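/- Let G = A₁ ∗_C A₋₁ be a word hyperbolic group which is the amalgamated free product of A₁ and A₋₁ along a virtually cyclic subgroup C, and let H be a finitely generated subgroup of G such that for every g ∈ G and every i ∈ {1, −1} the subgroup g⁻¹Hg ∩ Aᵢ is quasiconvex in Aᵢ. Then H is word hyperbolic. -/

import Mathlib

universe u v w

section Defs

variable {G : Type u} [Group G]

/-- A finite generating set closed under inversion. -/
def IsSymmGen (X : Set G) : Prop :=
  X.Finite ∧ (∀ x ∈ X, x⁻¹ ∈ X) ∧ Subgroup.closure X = ⊤

/-- Word length of `g` with respect to `X`. -/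
noncomputable def wordLength (X : Set G) (g : G) : ℕ :=
  sInf {n : ℕ | ∃ l : List G, l.length = n ∧ (∀ x ∈ l, x ∈ X) ∧ l.prod = g}

/-- Word metric. -/
noncomputable def wordDist (X : Set G) (g h : G) : ℕ :=
  wordLength X (g⁻¹ * h)

/-- Gromov product with respect to the word metric. -/
noncomputable def gromovProd (X : Set G) (x y w : G) : ℝ :=
  ((wordDist X x w : ℝ) + (wordDist X y w : ℝ) - (wordDist X x y : ℝ)) / 2

end Defs

/-- A group is word hyperbolic if for some finite symmetric generating set the Gromov
product satisfies the hyperbolicity inequality. -/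
def IsWordHyperbolic (G : Type u) [Group G] : Prop :=
  ∃ X : Set G, IsSymmGen X ∧ ∃ δ : ℝ, 0 ≤ δ ∧
    ∀ x y z w : G,
      gromovProd X x z w ≥ min (gromovProd X x y w) (gromovProd X y z w) - δ

/-- A subgroup is quasiconvex: it is finitely generated and word lengths distort linearly. -/
def IsQuasiconvex {G : Type u} [Group G] (A : Subgroup G) : Prop :=
  ∃ Y : Set ↥A, IsSymmGen Y ∧ ∃ X : Set G, IsSymmGen X ∧ ∃ c : ℝ, 0 < c ∧
    ∀ a : ↥A, (wordLength Y a : ℝ) ≤ c * (wordLength X (a : G) : ℝ) + c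

/-- Property (Q): every finitely generated subgroup is quasiconvex. -/
def HasPropertyQ (G : Type u) [Group G] : Prop :=
  ∀ H : Subgroup G, H.FG → IsQuasiconvex H

/-- A group is virtually cyclic if it has a cyclic subgroup of finite index. -/
def IsVirtuallyCyclic (C : Type u) [Group C] : Prop :=
  ∃ Z : Subgroup C, IsCyclic ↥Z ∧ Z.FiniteIndex

/-- `G` is the amalgamated free product of its subgroups `A` and `B` along `C`:
`C = A ⊓ B`, `A ⊔ B = ⊤` and `G` has the pushout universal property. -/
structure IsAmalgamatedFreeProduct {G : Type u} [Group G] (A B C : Subgroup G) : Prop where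
  le_left : C ≤ A
  le_right : C ≤ B
  inf_eq : A ⊓ B = C
  sup_eq_top : A ⊔ B = ⊤
  univ : ∀ (K : Type u) [Group K] (f : ↥A →* K) (g : ↥B →* K),
    (∀ (c : G) (hA : c ∈ A) (hB : c ∈ B), f ⟨c, hA⟩ = g ⟨c, hB⟩) →
    ∃ h : G →* K, (∀ a : ↥A, h a = f a) ∧ (∀ b : ↥B, h b = g b)

section Words

variable {G : Type u} [Group G]

/-- A word over the alphabet `X`. -/
def IsWordOver (X : Set G) (l : List G) : Prop := ∀ x ∈ l, x ∈ X

/-- A geodesic word over `X`. -/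
def IsGeodesicWord (X : Set G) (l : List G) : Prop :=
  IsWordOver X l ∧ l.length = wordLength X l.prod

/-- A `lam`-quasigeodesic word over `X`: every subword `v` satisfies
`l(v) ≤ lam * l_X(v̄) + lam`. -/
def IsQuasigeodesicWord (X : Set G) (lam : ℝ) (l : List G) : Prop :=
  IsWordOver X l ∧
    ∀ v : List G, v <:+: l → (v.length : ℝ) ≤ lam * (wordLength X v.prod : ℝ) + lam

/-- `g` is a shortest element of the subset `S` with respect to `wordLength X`. -/
def ShortestIn (X : Set G) (g : G) (S : Set G) : Prop :=
  g ∈ S ∧ ∀ s ∈ S, wordLength X g ≤ wordLength X s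

end Words

/-- `G` together with `ια, ιβ` is the pushout of `ℤ → A, 1 ↦ x` and `ℤ → B, 1 ↦ y`. -/
structure IsAmalgamOverZ {A : Type u} {B : Type v} {G : Type w}
    [Group A] [Group B] [Group G]
    (ια : A →* G) (ιβ : B →* G) (x : A) (y : B) : Prop where
  comm : ια x = ιβ y
  gen : ια.range ⊔ ιβ.range = ⊤
  univ : ∀ (K : Type (max u v w)) [Group K] (f : A →* K) (g : B →* K),
    f x = g y → ∃ h : G →* K, h.comp ια = f ∧ h.comp ιβ = g

/-!
A quasiconvex subgroup of a hyperbolic group is hyperbolic, so it suffices that `H` is quasiconvex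
in `G`. The virtually cyclic subgroup `C` is quasiconvex, and therefore so are the factors: a
geodesic that leaves a coset of a factor and comes back crosses the same coset of `C` both times.
In particular each trace `q⁻¹Hq ∩ Aᵢ` is quasiconvex in `G`.

Let `g ∈ H`. The normal form of `g` yields a chain of cosets `q C`, consecutive ones lying in a
common coset of a factor, each of which meets both the geodesic from `1` to `g` and, since `H` is
finitely generated, a path from `1` to `g` near `H`. If the trace `q⁻¹Hq ∩ C` is infinite, it has
finite index in `C`, so the whole coset `q C` is near `H` and `q` can be taken on the geodesic. If
the trace is finite, quasiconvexity of `q⁻¹Hq ∩ Aᵢ` bounds the Gromov product at `q` between a point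
of `q C` on the geodesic and the next point of the chain. If the step from `q` to the next point is
long, the bounds at its two ends combine and put `q` near the geodesic; a short step `m` does the
same unless `C ∩ mCm⁻¹` is infinite. Such `m` lie in a subgroup in which `C` has finite index, so
only boundedly many consecutive steps are of this kind. Hence the chain stays near the geodesic, and
between consecutive points of the chain the geodesic stays near `H` because the traces on the
factors are quasiconvex.
-/

section WordMetric

variable {G : Type*} [Group G] {X : Set G}

theorem wordLength_prod_le {l : List G} (hl : ∀ x ∈ l, x ∈ X) :
    wordLength X l.prod ≤ l.length :=
  Nat.sInf_le ⟨l, rfl, hl, rfl⟩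

@[simp]
theorem wordLength_one : wordLength X (1 : G) = 0 := by
  simpa using wordLength_prod_le (X := X) (l := []) (by simp)

theorem exists_wordLength_le_of_finite (X : Set G) {S : Set G} (hS : S.Finite) :
    ∃ R, ∀ g ∈ S, wordLength X g ≤ R := by
  obtain ⟨R, hR⟩ := (hS.image (wordLength X)).bddAbove
  exact ⟨R, fun g hg => hR ⟨g, hg, rfl⟩⟩

@[simp]
theorem wordDist_self (x : G) : wordDist X x x = 0 := by simp [wordDist]

@[simp]
theorem wordDist_one_left (x : G) : wordDist X 1 x = wordLength X x := by simp [wordDist]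

@[simp]
theorem wordDist_mul_left (g x y : G) : wordDist X (g * x) (g * y) = wordDist X x y := by
  simp [wordDist, mul_assoc]

namespace IsSymmGen

theorem inv_eq (hX : IsSymmGen X) : X⁻¹ = X :=
  Set.Subset.antisymm (fun x hx => inv_inv x ▸ hX.2.1 x⁻¹ hx) fun x hx => hX.2.1 x hx

theorem exists_list (hX : IsSymmGen X) (g : G) : ∃ l : List G, (∀ x ∈ l, x ∈ X) ∧ l.prod = g := by
  refine Submonoid.exists_list_of_mem_closure (s := X) ?_
  have hg : g ∈ (Subgroup.closure X).toSubmonoid := hX.2.2 ▸ Subgroup.mem_top g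
  rwa [Subgroup.closure_toSubmonoid, hX.inv_eq, Set.union_self] at hg

theorem exists_geodesic_list (hX : IsSymmGen X) (g : G) :
    ∃ l : List G, l.length = wordLength X g ∧ (∀ x ∈ l, x ∈ X) ∧ l.prod = g := by
  obtain ⟨l, hl, hg⟩ := hX.exists_list g
  exact Nat.sInf_mem
    (s := {n : ℕ | ∃ l : List G, l.length = n ∧ (∀ x ∈ l, x ∈ X) ∧ l.prod = g}) ⟨_, l, rfl, hl, hg⟩

theorem wordLength_mul_le (hX : IsSymmGen X) (g h : G) :
    wordLength X (g * h) ≤ wordLength X g + wordLength X h := by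
  obtain ⟨l, hl, hlX, rfl⟩ := hX.exists_geodesic_list g
  obtain ⟨m, hm, hmX, rfl⟩ := hX.exists_geodesic_list h
  rw [← hl, ← hm, ← List.prod_append, ← List.length_append]
  exact wordLength_prod_le fun x hx => (List.mem_append.1 hx).elim (hlX x) (hmX x)

theorem wordLength_inv_le (hX : IsSymmGen X) (g : G) : wordLength X g⁻¹ ≤ wordLength X g := by
  obtain ⟨l, hl, hlX, rfl⟩ := hX.exists_geodesic_list g
  rw [← hl, List.prod_inv_reverse]
  refine (wordLength_prod_le fun x hx => ?_).trans (by simp)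
  obtain ⟨y, hy, rfl⟩ := List.mem_map.1 (List.mem_reverse.1 hx)
  exact hX.2.1 y (hlX y hy)

theorem wordLength_inv (hX : IsSymmGen X) (g : G) : wordLength X g⁻¹ = wordLength X g :=
  (hX.wordLength_inv_le g).antisymm (by simpa using hX.wordLength_inv_le g⁻¹)

theorem eq_one_of_wordLength_eq_zero (hX : IsSymmGen X) {g : G} (hg : wordLength X g = 0) :
    g = 1 := by
  obtain ⟨l, hl, -, rfl⟩ := hX.exists_geodesic_list g
  rw [List.length_eq_zero_iff.1 (hl.trans hg), List.prod_nil]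

theorem mem_of_wordLength_eq_one (hX : IsSymmGen X) {g : G} (hg : wordLength X g = 1) : g ∈ X := by
  obtain ⟨l, hl, hlX, rfl⟩ := hX.exists_geodesic_list g
  obtain ⟨a, rfl⟩ := List.length_eq_one_iff.1 (hl.trans hg)
  simpa using hlX

theorem finite_setOf_wordLength_le (hX : IsSymmGen X) (n : ℕ) :
    {g : G | wordLength X g ≤ n}.Finite := by
  induction n with
  | zero =>
    exact (Set.finite_singleton (1 : G)).subset fun g hg =>
      hX.eq_one_of_wordLength_eq_zero (Nat.le_zero.1 hg)
  | succ n ih =>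
    refine ((hX.1.image2 (· * ·) ih).insert 1).subset fun g hg => ?_
    obtain ⟨l, hl, hlX, rfl⟩ := hX.exists_geodesic_list g
    cases l with
    | nil => simp
    | cons a l =>
      have hlen : l.length + 1 ≤ n + 1 := hl.trans_le hg
      exact Or.inr ⟨a, hlX a (by simp), l.prod,
        (wordLength_prod_le fun x hx => hlX x (by simp [hx])).trans (by omega), by simp⟩

theorem exists_wordLength_map_le {K : Type*} [Group K] {Y : Set K} (hY : IsSymmGen Y)
    (hX : IsSymmGen X) (f : K →* G) : ∃ L : ℕ, ∀ k, wordLength X (f k) ≤ L * wordLength Y k := by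
  obtain ⟨L, hL⟩ := exists_wordLength_le_of_finite X (hY.1.image f)
  suffices h : ∀ l : List K, (∀ y ∈ l, y ∈ Y) → wordLength X (f l.prod) ≤ L * l.length by
    refine ⟨L, fun k => ?_⟩
    obtain ⟨l, hl, hlY, rfl⟩ := hY.exists_geodesic_list k
    exact hl ▸ h l hlY
  intro l hl
  induction l with
  | nil => simp
  | cons a l ih =>
    rw [List.prod_cons, map_mul, List.length_cons, mul_add, mul_one]
    linarith [hX.wordLength_mul_le (f a) (f l.prod), hL (f a) ⟨a, hl a (by simp), rfl⟩,
      ih fun x hx => hl x (by simp [hx])]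

theorem wordDist_comm (hX : IsSymmGen X) (x y : G) : wordDist X x y = wordDist X y x := by
  rw [wordDist, ← hX.wordLength_inv, mul_inv_rev, inv_inv, wordDist]

theorem wordDist_triangle (hX : IsSymmGen X) (x y z : G) :
    wordDist X x z ≤ wordDist X x y + wordDist X y z := by
  simpa only [wordDist, mul_assoc, mul_inv_cancel_left] using
    hX.wordLength_mul_le (x⁻¹ * y) (y⁻¹ * z)

theorem exists_wordDist_eq (hX : IsSymmGen X) (x y : G) {t : ℕ} (ht : t ≤ wordDist X x y) :
    ∃ p, wordDist X x p = t ∧ wordDist X p y = wordDist X x y - t := by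
  obtain ⟨l, hl, hlX, hprod⟩ := hX.exists_geodesic_list (x⁻¹ * y)
  replace hl : l.length = wordDist X x y := hl
  set p := x * (l.take t).prod with hp
  have hxp : wordDist X x p ≤ t := by
    rw [wordDist, hp, inv_mul_cancel_left]
    exact (wordLength_prod_le fun z hz => hlX z (List.mem_of_mem_take hz)).trans (by simp)
  have hpy : wordDist X p y ≤ wordDist X x y - t := by
    have : p⁻¹ * y = (l.drop t).prod := by
      rw [hp, mul_inv_rev, mul_assoc, ← hprod, ← List.prod_take_mul_prod_drop l t,
        inv_mul_cancel_left]
    rw [wordDist, this, ← hl, ← List.length_drop]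
    exact wordLength_prod_le fun z hz => hlX z (List.mem_of_mem_drop hz)
  have := hX.wordDist_triangle x p y
  exact ⟨p, by omega, by omega⟩

end IsSymmGen

end WordMetric

/-- An `ℕ`-valued metric in which any two points are joined by a discrete geodesic. -/
structure IsGeodesicMetric {α : Type*} (d : α → α → ℕ) : Prop where
  dist_self : ∀ x, d x x = 0
  eq_of_dist_eq_zero : ∀ x y, d x y = 0 → x = y
  dist_comm : ∀ x y, d x y = d y x
  triangle : ∀ x y z, d x z ≤ d x y + d y z
  exists_between : ∀ x y t, t ≤ d x y → ∃ p, d x p = t ∧ d p y = d x y - t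

/-- A discrete geodesic metric satisfying Gromov's four-point condition. The constant `D` is twice
the usual `δ`, so that no halves of Gromov products occur. -/
structure IsHyperbolicMetric {α : Type*} (d : α → α → ℕ) (D : ℕ) : Prop
    extends IsGeodesicMetric d where
  four_point : ∀ x y z w,
    d x z + d y w ≤ d x y + d z w + D ∨ d x z + d y w ≤ d y z + d x w + D

theorem IsSymmGen.isGeodesicMetric {G : Type*} [Group G] {X : Set G} (hX : IsSymmGen X) :
    IsGeodesicMetric (wordDist X) :=
  ⟨wordDist_self, fun _ _ h => inv_mul_eq_one.1 (hX.eq_one_of_wordLength_eq_zero h),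
    hX.wordDist_comm, hX.wordDist_triangle, fun x y _ => hX.exists_wordDist_eq x y⟩

theorem gromovProd_hyperbolicity_iff {G : Type*} [Group G] {X : Set G} {δ : ℝ} (x y z w : G) :
    gromovProd X x z w ≥ min (gromovProd X x y w) (gromovProd X y z w) - δ ↔
      (wordDist X x z + wordDist X y w : ℝ) ≤ wordDist X x y + wordDist X z w + 2 * δ ∨
      (wordDist X x z + wordDist X y w : ℝ) ≤ wordDist X y z + wordDist X x w + 2 * δ := by
  simp only [gromovProd, ge_iff_le, sub_le_iff_le_add, min_le_iff]
  refine or_congr ⟨fun h => ?_, fun h => ?_⟩ ⟨fun h => ?_, fun h => ?_⟩ <;> linarith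

theorem IsWordHyperbolic.exists_isHyperbolicMetric {G : Type*} [Group G]
    (hG : IsWordHyperbolic G) :
    ∃ X : Set G, IsSymmGen X ∧ ∃ D, IsHyperbolicMetric (wordDist X) D := by
  obtain ⟨X, hX, δ, -, hδ⟩ := hG
  refine ⟨X, hX, ⌈2 * δ⌉₊, hX.isGeodesicMetric, fun x y z w => ?_⟩
  have hceil : 2 * δ ≤ (⌈2 * δ⌉₊ : ℝ) := Nat.le_ceil _
  refine ((gromovProd_hyperbolicity_iff x y z w).1 (hδ x y z w)).imp (fun h => ?_) fun h => ?_ <;>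
  · replace h := h.trans (add_le_add_right hceil _)
    exact_mod_cast h

theorem IsHyperbolicMetric.isWordHyperbolic {G : Type*} [Group G] {X : Set G} {D : ℕ}
    (h : IsHyperbolicMetric (wordDist X) D) (hX : IsSymmGen X) : IsWordHyperbolic G := by
  refine ⟨X, hX, D / 2, by positivity, fun x y z w => (gromovProd_hyperbolicity_iff x y z w).2 ?_⟩
  rw [mul_div_cancel₀ _ two_ne_zero]
  exact_mod_cast h.four_point x y z w

section Hyperbolic

variable {α : Type*} {d : α → α → ℕ} {D : ℕ}

/-- The points `γ 0, …, γ n` form a discrete geodesic. -/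
def IsGeodesic (d : α → α → ℕ) (γ : ℕ → α) (n : ℕ) : Prop :=
  ∀ i j, i ≤ j → j ≤ n → d (γ i) (γ j) = j - i

/-- The point `p` is at distance at most `r` from the set `S`. -/
def Near (d : α → α → ℕ) (r : ℕ) (S : Set α) (p : α) : Prop := ∃ s ∈ S, d p s ≤ r

/-- Every point on a geodesic between points of `S` is at distance at most `R` from `S`. -/
def IsQuasiconvexSet (d : α → α → ℕ) (R : ℕ) (S : Set α) : Prop :=
  ∀ x ∈ S, ∀ y ∈ S, ∀ p, d x p + d p y = d x y → Near d R S p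

theorem Near.mono {r r' : ℕ} {S : Set α} {p : α} (h : Near d r S p) (hr : r ≤ r') :
    Near d r' S p :=
  let ⟨s, hs, hps⟩ := h; ⟨s, hs, hps.trans hr⟩

theorem IsQuasiconvexSet.mono {R R' : ℕ} {S : Set α} (hS : IsQuasiconvexSet d R S) (hR : R ≤ R') :
    IsQuasiconvexSet d R' S := fun x hx y hy p hp => (hS x hx y hy p hp).mono hR

theorem IsGeodesic.dist_add_dist {γ : ℕ → α} {n i j k : ℕ} (hγ : IsGeodesic d γ n) (hij : i ≤ j)
    (hjk : j ≤ k) (hk : k ≤ n) : d (γ i) (γ j) + d (γ j) (γ k) = d (γ i) (γ k) := by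
  rw [hγ i j hij (hjk.trans hk), hγ j k hjk hk, hγ i k (hij.trans hjk) hk]
  omega

namespace IsGeodesicMetric

theorem near_of_mem (h : IsGeodesicMetric d) (r : ℕ) {S : Set α} {p : α} (hp : p ∈ S) :
    Near d r S p := ⟨p, hp, by simp [h.dist_self]⟩

theorem dist_le_of_steps (h : IsGeodesicMetric d) {c : ℕ → α} {m L : ℕ}
    (hc : ∀ i < m, d (c i) (c (i + 1)) ≤ L) {i j : ℕ} (hij : i ≤ j) (hj : j ≤ m) :
    d (c i) (c j) ≤ L * (j - i) := by
  induction j, hij using Nat.le_induction with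
  | base => simp [h.dist_self]
  | succ j hij ih =>
    rw [Nat.succ_sub hij, Nat.mul_succ]
    linarith [h.triangle (c i) (c j) (c (j + 1)), hc j (by omega), ih (by omega)]

theorem isGeodesic_of_steps (h : IsGeodesicMetric d) {γ : ℕ → α} {n : ℕ}
    (hγ : ∀ i < n, d (γ i) (γ (i + 1)) ≤ 1) (hn : d (γ 0) (γ n) = n) : IsGeodesic d γ n := by
  intro i j hij hj
  have hi := h.dist_le_of_steps hγ (Nat.zero_le i) (hij.trans hj)
  have hmid := h.dist_le_of_steps hγ hij hj
  have hend := h.dist_le_of_steps hγ hj le_rfl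
  have htri := h.triangle (γ 0) (γ i) (γ n)
  have htri' := h.triangle (γ i) (γ j) (γ n)
  omega

theorem exists_isGeodesic (h : IsGeodesicMetric d) (x y : α) :
    ∃ γ : ℕ → α, γ 0 = x ∧ γ (d x y) = y ∧ IsGeodesic d γ (d x y) := by
  suffices ∀ n y, d x y = n → ∃ γ : ℕ → α, γ 0 = x ∧ γ n = y ∧
      ∀ i < n, d (γ i) (γ (i + 1)) ≤ 1 by
    obtain ⟨γ, hx, hy, hstep⟩ := this _ y rfl
    exact ⟨γ, hx, hy, h.isGeodesic_of_steps hstep (by rw [hx, hy])⟩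
  intro n
  induction n with
  | zero => exact fun y hy => ⟨fun _ => x, rfl, h.eq_of_dist_eq_zero x y hy, by simp⟩
  | succ n ih =>
    intro y hy
    obtain ⟨p, hxp, hpy⟩ := h.exists_between x y n (by omega)
    obtain ⟨γ, hx, hp, hstep⟩ := ih p hxp
    refine ⟨fun k => if k ≤ n then γ k else y, by simp [hx], by simp, fun i hi => ?_⟩
    rcases Nat.lt_succ_iff_lt_or_eq.1 hi with hin | rfl
    · simpa [hin.le, Nat.succ_le_of_lt hin] using hstep i hin
    · simp [hp, hpy, hy]

theorem exists_isGeodesic_through (h : IsGeodesicMetric d) {x p y : α}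
    (hp : d x p + d p y = d x y) :
    ∃ γ : ℕ → α, γ 0 = x ∧ γ (d x p) = p ∧ γ (d x y) = y ∧ IsGeodesic d γ (d x y) := by
  obtain ⟨γ, hγx, hγp, hγ⟩ := h.exists_isGeodesic x p
  obtain ⟨η, hηp, hηy, hη⟩ := h.exists_isGeodesic p y
  set θ : ℕ → α := fun k => if k ≤ d x p then γ k else η (k - d x p) with hθ
  have hθγ : ∀ k ≤ d x p, θ k = γ k := fun k hk => if_pos hk
  have hθη : ∀ k, θ (d x p + k) = η k := by
    rintro (_ | k)
    · rw [add_zero, hθγ _ le_rfl, hγp, hηp]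
    · simp [hθ]
  have hx : θ 0 = x := (hθγ 0 (Nat.zero_le _)).trans hγx
  have hy : θ (d x y) = y := by rw [← hp, hθη, hηy]
  refine ⟨θ, hx, (hθγ _ le_rfl).trans hγp, hy, h.isGeodesic_of_steps (fun i hi => ?_) (by
    rw [hx, hy])⟩
  rcases lt_or_ge i (d x p) with hlt | hge
  · rw [hθγ i hlt.le, hθγ _ hlt, hγ i _ (Nat.le_add_right i 1) hlt, Nat.add_sub_cancel_left]
  · obtain ⟨k, rfl⟩ := Nat.exists_eq_add_of_le hge
    rw [hθη, add_assoc, hθη, hη k _ (Nat.le_add_right k 1) (by omega), Nat.add_sub_cancel_left]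

end IsGeodesicMetric

namespace IsHyperbolicMetric

theorem excess_split (h : IsHyperbolicMetric d D) {x p y : α} {e : ℕ} (z : α)
    (he : d x p + d p y ≤ d x y + e) :
    d x p + d p z ≤ d x z + (e + D) ∨ d z p + d p y ≤ d z y + (e + D) :=
  (h.four_point x z y p).imp (fun _ => by linarith [h.dist_comm z p, h.dist_comm y p])
    fun _ => by linarith [h.dist_comm z p, h.dist_comm y p]

theorem dist_le_of_excess (h : IsHyperbolicMetric d D) {x p y r : α} {e : ℕ}
    (he : d x p + d p y ≤ d x y + e) (hr : d x r + d r y = d x y)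
    (hxr : d x r = min (d x p) (d x y)) : d p r ≤ e + D := by
  rcases le_total (d x p) (d x y) with hle | hle
  · rw [min_eq_left hle] at hxr
    rcases h.four_point x p y r with h4 | h4 <;>
      linarith [h.dist_comm r y, h.dist_comm p y]
  · rw [min_eq_right hle] at hxr
    linarith [h.triangle p y r, h.dist_comm r y]

theorem exists_between_near (h : IsHyperbolicMetric d D) {x p y : α} {e : ℕ}
    (he : d x p + d p y ≤ d x y + e) : ∃ r, d x r + d r y = d x y ∧ d p r ≤ e + D := by
  have hle : min (d x p) (d x y) ≤ d x y := min_le_right _ _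
  obtain ⟨r, hxr, hry⟩ := h.exists_between x y _ hle
  have hr : d x r + d r y = d x y := by omega
  exact ⟨r, hr, h.dist_le_of_excess he hr hxr⟩

theorem exists_near_isGeodesic (h : IsHyperbolicMetric d D) {γ : ℕ → α} {n : ℕ}
    (hγ : IsGeodesic d γ n) {i j : ℕ} (hi : i ≤ n) (hj : j ≤ n) {p : α} {e : ℕ}
    (he : d (γ i) p + d p (γ j) ≤ d (γ i) (γ j) + e) : ∃ t ≤ n, d p (γ t) ≤ e + D := by
  wlog hij : i ≤ j generalizing i j
  · refine this hj hi ?_ (by omega)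
    linarith [h.dist_comm (γ i) p, h.dist_comm (γ j) p, h.dist_comm (γ i) (γ j)]
  have hle : min (d (γ i) p) (d (γ i) (γ j)) ≤ d (γ i) (γ j) := min_le_right _ _
  generalize hm : min (d (γ i) p) (d (γ i) (γ j)) = m at hle
  have hmj : i + m ≤ j := by have := hγ i j hij hj; omega
  refine ⟨i + m, hmj.trans hj, h.dist_le_of_excess he
    (hγ.dist_add_dist (Nat.le_add_right i m) hmj hj) ?_⟩
  rw [hm, hγ i _ (Nat.le_add_right i m) (hmj.trans hj), Nat.add_sub_cancel_left]

theorem near_of_isQuasiconvexSet (h : IsHyperbolicMetric d D) {R : ℕ} {S : Set α}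
    (hS : IsQuasiconvexSet d R S) {r e : ℕ} {x y p : α} (hx : Near d r S x) (hy : Near d r S y)
    (he : d x p + d p y ≤ d x y + e) : Near d (R + (e + 4 * r + D)) S p := by
  obtain ⟨s, hs, hxs⟩ := hx
  obtain ⟨t, ht, hyt⟩ := hy
  have he' : d s p + d p t ≤ d s t + (e + 4 * r) := by
    linarith [h.triangle s x p, h.triangle p y t, h.triangle x s y, h.triangle s t y,
      h.dist_comm s x, h.dist_comm t y]
  obtain ⟨q, hq, hpq⟩ := h.exists_between_near he'
  obtain ⟨w, hw, hqw⟩ := hS s hs t ht q hq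
  exact ⟨w, hw, by linarith [h.triangle p q w]⟩

theorem dist_add_dist_le_of_diverge (h : IsHyperbolicMetric d D) {R r B : ℕ} {S T : Set α}
    (hS : IsQuasiconvexSet d R S) (hT : IsQuasiconvexSet d R T) {w p p' : α}
    (hwS : Near d r S w) (hpS : Near d r S p) (hwT : Near d r T w) (hpT : Near d r T p')
    (hB : ∀ z, Near d (R + (D + 2 + 4 * r + D)) S z → Near d (R + (D + 2 + 4 * r + D)) T z →
      d w z ≤ B) :
    d w p + d w p' ≤ d p p' + (2 * B + 2) := by
  by_contra! hlt
  set t := (d w p + d w p' - d p p') / 2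
  have hwp' := h.triangle w p p'
  have hwp := h.triangle w p' p
  rw [h.dist_comm p' p] at hwp
  obtain ⟨z, hwz, hzp⟩ := h.exists_between w p t (by omega)
  have hz : d w z + d z p' ≤ d w p' + (D + 2) := by
    have := h.dist_comm z p
    have := h.dist_comm z w
    have := h.dist_comm p w
    have := h.dist_comm p' w
    rcases h.four_point z p p' w with h4 | h4 <;> omega
  have hzS := (h.near_of_isQuasiconvexSet hS hwS hpS (p := z) (e := 0) (by omega)).mono
    (by omega : _ ≤ R + (D + 2 + 4 * r + D))
  have := hB z hzS (h.near_of_isQuasiconvexSet hT hwT hpT hz)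
  omega

theorem dist_add_dist_le_of_corners (h : IsHyperbolicMetric d D) {p q q' p' : α} {R : ℕ}
    (hq : d p q + d q q' ≤ d p q' + R) (hq' : d q q' + d q' p' ≤ d q p' + R)
    (hlong : R + D < d q q') : d p q + d q p' ≤ d p p' + (R + D) := by
  have := h.dist_comm q p'
  have := h.dist_comm q' p'
  have := h.dist_comm q q'
  rcases h.four_point p p' q' q with h4 | h4 <;> omega

end IsHyperbolicMetric

end Hyperbolic

section Slim

variable {α : Type*} {d : α → α → ℕ}

theorem exists_lt_and_not_succ {P : ℕ → Prop} {n : ℕ} (h0 : P 0) (hn : ¬ P n) :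
    ∃ u < n, P u ∧ ¬ P (u + 1) := by
  by_contra! hstep
  refine hn (?_ : P n)
  suffices ∀ u ≤ n, P u from this n le_rfl
  intro u
  induction u with
  | zero => exact fun _ => h0
  | succ u ih => exact fun hu => hstep u hu (ih (Nat.le_of_succ_le hu))

namespace IsGeodesicMetric

theorem exists_near_and_near (h : IsGeodesicMetric d) {γ : ℕ → α} {n R : ℕ} {S T : Set α}
    (hγ : IsGeodesic d γ n) (h0 : Near d R S (γ 0)) (hn : Near d R T (γ n))
    (hST : ∀ u ≤ n, Near d R S (γ u) ∨ Near d R T (γ u)) :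
    ∃ u ≤ n, Near d R S (γ u) ∧ Near d (R + 1) T (γ u) := by
  by_cases hSn : Near d R S (γ n)
  · exact ⟨n, le_rfl, hSn, hn.mono (Nat.le_succ R)⟩
  obtain ⟨u, hu, hSu, hSu'⟩ := exists_lt_and_not_succ (P := fun u => Near d R S (γ u)) h0 hSn
  obtain ⟨q, hq, huq⟩ := (hST (u + 1) hu).resolve_left hSu'
  have hstep := hγ u (u + 1) (Nat.le_succ u) hu
  exact ⟨u, hu.le, hSu, q, hq, by have := h.triangle (γ u) (γ (u + 1)) q; omega⟩

/-- A point of `[x, y]` whose distance to `w` is, up to `Δ`, the Gromov product of `x` and `y`. -/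
theorem exists_between_dist_le_of_slim (h : IsGeodesicMetric d) {Δ : ℕ} {x y w : α}
    (hslim : ∀ p, d x p + d p y = d x y →
      Near d Δ {q | d x q + d q w = d x w} p ∨ Near d Δ {q | d w q + d q y = d w y} p) :
    ∃ p, d x p + d p y = d x y ∧ 2 * d w p + d x y ≤ d x w + d y w + (4 * Δ + 2) := by
  obtain ⟨γ, rfl, hγy, hγ⟩ := h.exists_isGeodesic x y
  have hbetween : ∀ u ≤ d (γ 0) y, d (γ 0) (γ u) + d (γ u) y = d (γ 0) y := fun u hu => by
    simpa only [hγy] using hγ.dist_add_dist (Nat.zero_le u) hu le_rfl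
  obtain ⟨u, hu, ⟨q, hq, huq⟩, q', hq', huq'⟩ := h.exists_near_and_near hγ
    (h.near_of_mem Δ (by simp [h.dist_self])) (h.near_of_mem Δ (by simp [h.dist_self, hγy]))
    fun u hu => hslim (γ u) (hbetween u hu)
  rw [Set.mem_ofPred_eq] at hq hq'
  refine ⟨γ u, hbetween u hu, ?_⟩
  linarith [hbetween u hu, h.triangle (γ 0) q (γ u), h.triangle (γ u) q w, h.triangle w q' (γ u),
    h.triangle (γ u) q' y, h.dist_comm q (γ u), h.dist_comm q' (γ u), h.dist_comm w (γ u),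
    h.dist_comm w y]

theorem isHyperbolicMetric_of_slim (h : IsGeodesicMetric d) {Δ : ℕ}
    (hslim : ∀ x y z p, d x p + d p y = d x y →
      Near d Δ {q | d x q + d q z = d x z} p ∨ Near d Δ {q | d z q + d q y = d z y} p) :
    IsHyperbolicMetric d (6 * Δ + 2) := by
  refine ⟨h, fun x y z w => ?_⟩
  obtain ⟨p, hp, hpw⟩ := h.exists_between_dist_le_of_slim fun p hp => hslim x z w p hp
  refine (hslim x z y p hp).imp ?_ ?_ <;> rintro ⟨q, hq, hpq⟩ <;> rw [Set.mem_ofPred_eq] at hq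
  · linarith [h.triangle x q w, h.triangle y q w, h.triangle q p w, h.dist_comm q p,
      h.dist_comm p w, h.dist_comm y q]
  · linarith [h.triangle y q w, h.triangle z q w, h.triangle q p w, h.dist_comm q p,
      h.dist_comm p w, h.dist_comm z q]

end IsGeodesicMetric

end Slim

section Morse

variable {α : Type*} {d : α → α → ℕ} {D : ℕ}

/-- The points `c 0, …, c m` form a discrete quasigeodesic with steps of length at most `L`. -/
structure IsQuasigeodesic (d : α → α → ℕ) (L l : ℕ) (c : ℕ → α) (m : ℕ) : Prop where
  step_le : ∀ i < m, d (c i) (c (i + 1)) ≤ L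
  sub_le : ∀ i j, i ≤ j → j ≤ m → j - i ≤ l * d (c i) (c j) + l

theorem exists_forall_linear_le_two_pow (a b : ℕ) : ∃ s₀, ∀ s ≥ s₀, a * s + b ≤ 2 ^ s := by
  have hsq : ∀ s ≥ 4, s * s ≤ 2 ^ s := fun s hs => by
    induction s, hs using Nat.le_induction with
    | base => norm_num
    | succ s hs ih => rw [pow_succ]; nlinarith
  refine ⟨a + b + 4, fun s hs => (?_ : _ ≤ s * s).trans (hsq s (by omega))⟩
  nlinarith

theorem exists_bound_of_forall_linear_le_two_pow (a b c D : ℕ) :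
    ∃ R, ∀ r, (∀ k, a * r + b ≤ 2 ^ k → r ≤ c + k * D) → r ≤ R := by
  obtain ⟨s₀, hs₀⟩ := exists_forall_linear_le_two_pow (a * (D + 1)) (a * (c + (D + 1)) + b)
  refine ⟨c + s₀ * (D + 1), fun r hr => ?_⟩
  suffices ∀ s, r ≤ c + (s₀ + s) * (D + 1) → r ≤ c + s₀ * (D + 1) from this r (by nlinarith)
  intro s
  induction s with
  | zero => exact id
  | succ s ih =>
    refine fun hrs => ih ((hr (s₀ + s) ?_).trans (by gcongr; omega))
    calc a * r + b ≤ a * (c + (s₀ + (s + 1)) * (D + 1)) + b := by gcongr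
      _ = a * (D + 1) * (s₀ + s) + (a * (c + (D + 1)) + b) := by ring
      _ ≤ 2 ^ (s₀ + s) := hs₀ _ (Nat.le_add_right _ _)

theorem IsGeodesicMetric.exists_between_near_of_forall_near (h : IsGeodesicMetric d) {r : ℕ}
    {S : Set α} {a p : α} (ha : a ∈ S) (hnear : ∀ y, d a y + d y p = d a p → Near d r S y) :
    ∃ y, d a y + d y p = d a p ∧ d y p ≤ 2 * r ∧
      ∃ s ∈ S, d y s ≤ r ∧ (d y p = 2 * r ∨ d y s = 0) := by
  rcases le_total (2 * r) (d a p) with hle | hle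
  · obtain ⟨y, hay, hyp⟩ := h.exists_between a p (d a p - 2 * r) (Nat.sub_le _ _)
    obtain ⟨s, hs, hys⟩ := hnear y (by omega)
    exact ⟨y, by omega, by omega, s, hs, hys, Or.inl (by omega)⟩
  · exact ⟨a, by simp [h.dist_self], hle, a, ha, by simp [h.dist_self]⟩

namespace IsHyperbolicMetric

theorem exists_dist_le_of_path (h : IsHyperbolicMetric d D) {c : ℕ → α} {L : ℕ} {p : α} (k : ℕ)
    {a b e : ℕ} (hab : a ≤ b) (hk : b - a ≤ 2 ^ k)
    (hc : ∀ i, a ≤ i → i < b → d (c i) (c (i + 1)) ≤ L)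
    (he : d (c a) p + d p (c b) ≤ d (c a) (c b) + e) :
    ∃ i ≤ b, d p (c i) ≤ e + k * D + L := by
  induction k generalizing a b e with
  | zero =>
    have : d (c a) (c b) ≤ L := by
      rcases hab.eq_or_lt with rfl | hlt
      · simp [h.dist_self]
      · obtain rfl : b = a + 1 := by rw [pow_zero] at hk; omega
        exact hc a le_rfl hlt
    exact ⟨b, le_rfl, by omega⟩
  | succ k ih =>
    rw [pow_succ] at hk
    rw [Nat.succ_mul]
    rcases le_or_gt (b - a) (2 ^ k) with hle | hlt
    · obtain ⟨i, hib, hpi⟩ := ih hab hle hc he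
      exact ⟨i, hib, by omega⟩
    rcases h.excess_split (c (a + 2 ^ k)) he with hleft | hright
    · obtain ⟨i, hib, hpi⟩ := ih (by omega) (by omega) (fun i hai hi => hc i hai (by omega)) hleft
      exact ⟨i, by omega, by omega⟩
    · obtain ⟨i, hib, hpi⟩ := ih (by omega) (by omega) (fun i hai hi => hc i (by omega) hi) hright
      exact ⟨i, hib, by omega⟩

theorem near_image_of_isQuasigeodesic (h : IsHyperbolicMetric d D) {c : ℕ → α} {L l m : ℕ}
    (hc : IsQuasigeodesic d L l c m) {p : α} {k i j e : ℕ} (hi : i ≤ m) (hj : j ≤ m)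
    (he : d (c i) p + d p (c j) ≤ d (c i) (c j) + e) (hk : l * d (c i) (c j) + l ≤ 2 ^ k) :
    Near d (e + k * D + L) (c '' Set.Iic m) p := by
  wlog hij : i ≤ j generalizing i j
  · refine this hj hi ?_ ?_ (by omega)
    · linarith [h.dist_comm (c i) p, h.dist_comm (c j) p, h.dist_comm (c i) (c j)]
    · rwa [h.dist_comm]
  obtain ⟨t, htj, hpt⟩ := h.exists_dist_le_of_path k hij ((hc.sub_le i j hij hj).trans hk)
    (fun u _ hu => hc.step_le u (hu.trans_le hj)) he
  exact ⟨c t, ⟨t, htj.trans hj, rfl⟩, hpt⟩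

/-- If `p` is a point of `[a, b]` as far from `S` as possible, a detour along `S` around the ball
about `p` starts and ends close to `p`. -/
theorem exists_detour_of_farthest (h : IsHyperbolicMetric d D) {S : Set α} {a b p : α} {r : ℕ}
    (ha : a ∈ S) (hb : b ∈ S) (hp : d a p + d p b = d a b) (hfar : ∀ s ∈ S, r ≤ d p s)
    (hnear : ∀ q, d a q + d q b = d a b → Near d r S q) :
    r ≤ D ∨ ∃ s ∈ S, ∃ t ∈ S, d s t ≤ 6 * r ∧ d s p + d p t ≤ d s t + 2 * D := by
  obtain ⟨y, hay, hyp, s, hs, hys, hy⟩ := h.exists_between_near_of_forall_near ha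
    (r := r) (p := p) fun q hq =>
      hnear q (by linarith [h.triangle a q b, h.triangle q p b])
  obtain ⟨z, hbz, hzp, t, ht, hzt, hz⟩ := h.exists_between_near_of_forall_near hb
    (r := r) (p := p) fun q hq => hnear q (by
      linarith [h.triangle a q b, h.triangle a p q, h.dist_comm b q, h.dist_comm q p,
        h.dist_comm b p])
  have hyz : d y p + d p z ≤ d y z + 0 := by
    linarith [h.triangle a y b, h.triangle y z b, h.dist_comm b z, h.dist_comm z p, h.dist_comm b p]
  have hps := hfar s hs
  have hpt := hfar t ht
  rcases h.excess_split s hyz with hsy | hsz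
  · left; omega
  rcases h.excess_split t hsz with hst | htz
  · refine Or.inr ⟨s, hs, t, ht, ?_, by omega⟩
    linarith [h.triangle s y t, h.triangle y z t, h.triangle y p z, h.dist_comm s y,
      h.dist_comm z p]
  · have := h.triangle p z t
    have := h.dist_comm z p
    have := h.dist_comm t p
    have := h.dist_comm t z
    left; omega

theorem exists_forall_near_image_of_isQuasigeodesic (h : IsHyperbolicMetric d D) (L l : ℕ) :
    ∃ R, ∀ c m, IsQuasigeodesic d L l c m → ∀ p, d (c 0) p + d p (c m) = d (c 0) (c m) →
      Near d R (c '' Set.Iic m) p := by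
  obtain ⟨R, hR⟩ := exists_bound_of_forall_linear_le_two_pow (l * 6) l (2 * D + L) D
  refine ⟨R + D, fun c m hc => ?_⟩
  classical
  set S := c '' Set.Iic m
  have h0 : c 0 ∈ S := ⟨0, Nat.zero_le m, rfl⟩
  have hm : c m ∈ S := ⟨m, Set.self_mem_Iic, rfl⟩
  have hbdd : ∃ r, ∀ p, d (c 0) p + d p (c m) = d (c 0) (c m) → Near d r S p :=
    ⟨d (c 0) (c m), fun p hp => ⟨c m, hm, hp ▸ Nat.le_add_left _ _⟩⟩
  suffices hr : Nat.find hbdd ≤ R + D from fun p hp => (Nat.find_spec hbdd p hp).mono hr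
  rcases Nat.eq_zero_or_pos (Nat.find hbdd) with hr | hr
  · omega
  obtain ⟨p, hp, hfar⟩ : ∃ p, d (c 0) p + d p (c m) = d (c 0) (c m) ∧
      ∀ s ∈ S, Nat.find hbdd ≤ d p s := by
    by_contra! hcon
    refine Nat.find_min hbdd (Nat.sub_lt hr one_pos) fun p hp => ?_
    obtain ⟨s, hs, hlt⟩ := hcon p hp
    exact ⟨s, hs, by omega⟩
  obtain hle | ⟨_, ⟨i, hi, rfl⟩, _, ⟨j, hj, rfl⟩, hij, hpij⟩ :=
    h.exists_detour_of_farthest h0 hm hp hfar (Nat.find_spec hbdd)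
  · omega
  -- The detour has at most `6 l r + l` steps, so bisecting it leads to within `O(log r)` of `p`.
  refine (hR _ fun k hk => ?_).trans (Nat.le_add_right R D)
  have hlij : l * d (c i) (c j) + l ≤ 2 ^ k := hk.trans' (by rw [mul_assoc]; gcongr)
  obtain ⟨s, hs, hps⟩ := h.near_image_of_isQuasigeodesic hc hi hj hpij hlij
  have := hfar s hs
  omega

theorem exists_forall_near_image_of_excess_le (h : IsHyperbolicMetric d D) (L l e : ℕ) :
    ∃ R, ∀ c m, IsQuasigeodesic d L l c m → ∀ p, d (c 0) p + d p (c m) ≤ d (c 0) (c m) + e →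
      Near d R (c '' Set.Iic m) p := by
  obtain ⟨R, hR⟩ := h.exists_forall_near_image_of_isQuasigeodesic L l
  refine ⟨e + D + R, fun c m hc p hp => ?_⟩
  obtain ⟨q, hq, hpq⟩ := h.exists_between_near hp
  obtain ⟨s, hs, hqs⟩ := hR c m hc q hq
  exact ⟨s, hs, (h.triangle p q s).trans (add_le_add hpq hqs)⟩

theorem exists_forall_excess_le_of_isQuasigeodesic (h : IsHyperbolicMetric d D) (L l : ℕ) :
    ∃ E, ∀ c m, IsQuasigeodesic d L l c m → ∀ t ≤ m,
      d (c 0) (c t) + d (c t) (c m) ≤ d (c 0) (c m) + E := by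
  obtain ⟨R, hR⟩ := h.exists_forall_near_image_of_isQuasigeodesic L l
  refine ⟨2 * (L * (l * (2 * R + 1) + l) + R), fun c m hc t ht => ?_⟩
  obtain ⟨γ, hγ0, hγm, hγ⟩ := h.exists_isGeodesic (c 0) (c m)
  have hbetween : ∀ u ≤ d (c 0) (c m), d (c 0) (γ u) + d (γ u) (c m) = d (c 0) (c m) := by
    intro u hu
    simpa only [hγ0, hγm] using hγ.dist_add_dist (Nat.zero_le u) hu le_rfl
  obtain ⟨u, hu, ⟨_, ⟨i, hit, rfl⟩, hui⟩, _, ⟨j, ⟨htj, hjm⟩, rfl⟩, huj⟩ :=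
    h.exists_near_and_near (R := R) (S := c '' Set.Iic t) (T := c '' Set.Icc t m) hγ
      (h.near_of_mem R ⟨0, Nat.zero_le t, hγ0.symm⟩)
      (h.near_of_mem R ⟨m, ⟨ht, le_rfl⟩, hγm.symm⟩) fun u hu => by
        obtain ⟨_, ⟨i, him, rfl⟩, hui⟩ := hR c m hc (γ u) (hbetween u hu)
        exact (le_total i t).imp (fun hit => ⟨c i, ⟨i, hit, rfl⟩, hui⟩)
          fun hti => ⟨c i, ⟨i, ⟨hti, him⟩, rfl⟩, hui⟩
  have hij : d (c i) (c j) ≤ 2 * R + 1 := by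
    linarith [h.triangle (c i) (γ u) (c j), h.dist_comm (c i) (γ u)]
  have hit' : d (c i) (c t) ≤ L * (l * (2 * R + 1) + l) := by
    refine (h.dist_le_of_steps hc.step_le hit ht).trans (Nat.mul_le_mul_left L ?_)
    calc t - i ≤ j - i := Nat.sub_le_sub_right htj i
      _ ≤ l * d (c i) (c j) + l := hc.sub_le i j (hit.trans htj) hjm
      _ ≤ l * (2 * R + 1) + l := by gcongr
  have htu : d (c t) (γ u) ≤ L * (l * (2 * R + 1) + l) + R := by
    linarith [h.triangle (c t) (c i) (γ u), h.dist_comm (c t) (c i), h.dist_comm (γ u) (c i)]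
  linarith [hbetween u hu, h.triangle (c 0) (γ u) (c t), h.triangle (c t) (γ u) (c m),
    h.dist_comm (γ u) (c t)]

end IsHyperbolicMetric

end Morse

section Subgroups

variable {G : Type*} [Group G] {X : Set G} {D : ℕ}

theorem exists_forall_mem_of_finite {ι : Type*} {s : Set ι} (hs : s.Finite) {P : ι → ℕ → Prop}
    (hP : ∀ i, Monotone (P i)) (h : ∀ i ∈ s, ∃ R, P i R) : ∃ R, ∀ i ∈ s, P i R := by
  refine ((Filter.eventually_all_finite hs).2 fun i hi => ?_).exists (f := Filter.atTop)
  obtain ⟨R, hR⟩ := h i hi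
  exact Filter.eventually_atTop.2 ⟨R, fun _ hle => hP i hle hR⟩

theorem near_preimage_mul_left_iff {r : ℕ} {S : Set G} {g p : G} :
    Near (wordDist X) r ((g * ·) ⁻¹' S) p ↔ Near (wordDist X) r S (g * p) := by
  constructor <;> rintro ⟨s, hs, hps⟩
  · exact ⟨g * s, hs, by rwa [wordDist_mul_left]⟩
  · exact ⟨g⁻¹ * s, by simpa using hs, by rwa [← wordDist_mul_left g, mul_inv_cancel_left]⟩

theorem IsQuasiconvexSet.preimage_mul_left {R : ℕ} {S : Set G}
    (hS : IsQuasiconvexSet (wordDist X) R S) (g : G) :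
    IsQuasiconvexSet (wordDist X) R ((g * ·) ⁻¹' S) := fun x hx y hy _ hp =>
  near_preimage_mul_left_iff.2 <| hS _ hx _ hy _ <| by simpa only [wordDist_mul_left] using hp

theorem IsSymmGen.exists_isQuasiconvexSet_of_finite (hX : IsSymmGen X) {S : Set G}
    (hS : S.Finite) : ∃ R, IsQuasiconvexSet (wordDist X) R S := by
  obtain ⟨R, hR⟩ := exists_wordLength_le_of_finite X (hS.image2 (fun x y => x⁻¹ * y) hS)
  refine ⟨R, fun x hx y hy p hp => ⟨x, hx, ?_⟩⟩
  have hxy : wordDist X x y ≤ R := hR _ ⟨x, hx, y, hy, rfl⟩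
  linarith [hX.wordDist_comm x p]

theorem IsQuasiconvexSet.exists_of_near {α : Type*} {d : α → α → ℕ} (h : IsHyperbolicMetric d D)
    {R r : ℕ} {S T : Set α} (hS : IsQuasiconvexSet d R S) (hST : S ⊆ T)
    (hT : ∀ t ∈ T, Near d r S t) : ∃ R', IsQuasiconvexSet d R' T := by
  refine ⟨R + (0 + 4 * r + D), fun x hx y hy p hp => ?_⟩
  obtain ⟨s, hs, hps⟩ := h.near_of_isQuasiconvexSet hS (hT x hx) (hT y hy) (e := 0) hp.le
  exact ⟨s, hST hs, hps⟩

theorem IsSymmGen.exists_near_inf (hX : IsSymmGen X) (P Q : Subgroup G) (r : ℕ) :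
    ∃ R, ∀ g, Near (wordDist X) r P g → Near (wordDist X) r Q g →
      Near (wordDist X) R (P ⊓ Q : Subgroup G) g := by
  obtain ⟨R, hR⟩ := exists_forall_mem_of_finite
    ((hX.finite_setOf_wordLength_le r).prod (hX.finite_setOf_wordLength_le r))
    (P := fun b R => ∀ g, g * b.1 ∈ P → g * b.2 ∈ Q → Near (wordDist X) R (P ⊓ Q : Subgroup G) g)
    (fun _ _ _ hle hR g hP hQ => (hR g hP hQ).mono hle) fun b _ => by
      by_cases hex : ∃ w, w * b.1 ∈ P ∧ w * b.2 ∈ Q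
      · obtain ⟨w, hwP, hwQ⟩ := hex
        refine ⟨wordLength X w⁻¹, fun g hP hQ => ⟨g * w⁻¹, ⟨?_, ?_⟩, by simp [wordDist]⟩⟩
        · simpa [mul_assoc] using P.mul_mem hP (P.inv_mem hwP)
        · simpa [mul_assoc] using Q.mul_mem hQ (Q.inv_mem hwQ)
      · exact ⟨0, fun g hP hQ => absurd ⟨g, hP, hQ⟩ hex⟩
  refine ⟨R, ?_⟩
  rintro g ⟨p, hp, hgp⟩ ⟨q, hq, hgq⟩
  exact hR (g⁻¹ * p, g⁻¹ * q) ⟨hgp, hgq⟩ g (by simpa using hp) (by simpa using hq)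

theorem IsSymmGen.exists_isQuasigeodesic_map {K : Type*} [Group K] {Y : Set K} (hY : IsSymmGen Y)
    (hX : IsSymmGen X) (f : K →* G) {c : ℕ}
    (hc : ∀ k, wordLength Y k ≤ c * wordLength X (f k) + c) :
    ∃ L, ∀ γ n, IsGeodesic (wordDist Y) γ n →
      IsQuasigeodesic (wordDist X) L c (fun i => f (γ i)) n := by
  obtain ⟨L, hL⟩ := hY.exists_wordLength_map_le hX f
  have hf : ∀ x y, wordDist X (f x) (f y) = wordLength X (f (x⁻¹ * y)) := by simp [wordDist]
  refine ⟨L, fun γ n hγ => ⟨fun i hi => ?_, fun i j hij hj => ?_⟩⟩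
  · have hstep : wordLength Y ((γ i)⁻¹ * γ (i + 1)) ≤ 1 :=
      (hγ i (i + 1) (Nat.le_add_right i 1) hi).le.trans (by omega)
    rw [hf]
    exact (hL _).trans ((Nat.mul_le_mul_left L hstep).trans_eq (mul_one L))
  · rw [← hγ i j hij hj, hf]
    exact hc _

namespace IsHyperbolicMetric

theorem exists_isQuasiconvexSet_range (h : IsHyperbolicMetric (wordDist X) D) (hX : IsSymmGen X)
    {K : Type*} [Group K] {Y : Set K} (hY : IsSymmGen Y) (f : K →* G) {c : ℕ}
    (hc : ∀ k, wordLength Y k ≤ c * wordLength X (f k) + c) :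
    ∃ R, IsQuasiconvexSet (wordDist X) R (Set.range f) := by
  obtain ⟨L, hL⟩ := hY.exists_isQuasigeodesic_map hX f hc
  obtain ⟨R, hR⟩ := h.exists_forall_near_image_of_isQuasigeodesic L c
  refine ⟨R, ?_⟩
  rintro _ ⟨x, rfl⟩ _ ⟨y, rfl⟩ p hp
  obtain ⟨γ, rfl, hγy, hγ⟩ := hY.isGeodesicMetric.exists_isGeodesic x y
  obtain ⟨_, ⟨i, -, rfl⟩, hi⟩ := hR _ _ (hL _ _ hγ) p (by simpa only [hγy] using hp)
  exact ⟨_, ⟨_, rfl⟩, hi⟩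

theorem exists_forall_near_of_map (h : IsHyperbolicMetric (wordDist X) D) (hX : IsSymmGen X)
    {K : Type*} [Group K] {Y : Set K} (hY : IsSymmGen Y) (f : K →* G) {c : ℕ}
    (hc : ∀ k, wordLength Y k ≤ c * wordLength X (f k) + c) (e : ℕ) :
    ∃ Δ, ∀ x y p, wordDist X (f x) (f p) + wordDist X (f p) (f y) ≤
        wordDist X (f x) (f y) + e →
      Near (wordDist Y) Δ {q | wordDist Y x q + wordDist Y q y = wordDist Y x y} p := by
  obtain ⟨L, hL⟩ := hY.exists_isQuasigeodesic_map hX f hc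
  obtain ⟨R, hR⟩ := h.exists_forall_near_image_of_excess_le L c e
  refine ⟨c * R + c, fun x y p hp => ?_⟩
  obtain ⟨γ, rfl, hγy, hγ⟩ := hY.isGeodesicMetric.exists_isGeodesic x y
  obtain ⟨_, ⟨i, hi, rfl⟩, hpi⟩ := hR _ _ (hL _ _ hγ) (f p) (by simpa only [hγy] using hp)
  refine ⟨γ i, ?_, (hc (p⁻¹ * γ i)).trans ?_⟩
  · simpa only [hγy, Set.mem_ofPred_eq] using hγ.dist_add_dist (Nat.zero_le i) hi le_rfl
  · rw [map_mul, map_inv]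
    gcongr
    exact hpi

theorem exists_isHyperbolicMetric_of_map (h : IsHyperbolicMetric (wordDist X) D)
    (hX : IsSymmGen X) {K : Type*} [Group K] {Y : Set K} (hY : IsSymmGen Y) (f : K →* G) {c : ℕ}
    (hc : ∀ k, wordLength Y k ≤ c * wordLength X (f k) + c) :
    ∃ D', IsHyperbolicMetric (wordDist Y) D' := by
  obtain ⟨L, hL⟩ := hY.exists_isQuasigeodesic_map hX f hc
  obtain ⟨E, hE⟩ := h.exists_forall_excess_le_of_isQuasigeodesic L c
  obtain ⟨Δ, hΔ⟩ := h.exists_forall_near_of_map hX hY f hc (E + D)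
  refine ⟨_, hY.isGeodesicMetric.isHyperbolicMetric_of_slim (Δ := Δ) fun x y z p hp => ?_⟩
  obtain ⟨γ, rfl, hγp, hγy, hγ⟩ := hY.isGeodesicMetric.exists_isGeodesic_through hp
  have he := hE _ _ (hL _ _ hγ) (wordDist Y (γ 0) p) (Nat.le.intro hp)
  simp only [hγp, hγy] at he
  exact (h.excess_split (f z) he).imp (hΔ _ _ _) (hΔ _ _ _)

end IsHyperbolicMetric

theorem IsSymmGen.exists_list_of_near_path (hX : IsSymmGen X) {A : Subgroup G} {R n : ℕ}
    {γ : ℕ → G} (hγ0 : γ 0 = 1) (hstep : ∀ i < n, wordDist X (γ i) (γ (i + 1)) ≤ 1)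
    (hA : ∀ i < n, Near (wordDist X) R A (γ i)) {i : ℕ} (hi : i ≤ n) (s : A)
    (hs : wordDist X (γ i) s ≤ R) :
    ∃ l : List A, l.length ≤ i + 1 ∧ (∀ x ∈ l, wordLength X (x : G) ≤ 2 * R + 1) ∧
      l.prod = s := by
  induction i generalizing s with
  | zero =>
    rw [hγ0, wordDist_one_left] at hs
    exact ⟨[s], by simp, by simpa using by omega, by simp⟩
  | succ i ih =>
    obtain ⟨t, ht, hit⟩ := hA i hi
    obtain ⟨l, hl, hlR, hprod⟩ := ih (Nat.le_of_succ_le hi) ⟨t, ht⟩ hit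
    refine ⟨l ++ [(⟨t, ht⟩ : A)⁻¹ * s], by simpa using hl, ?_, by simp [hprod]⟩
    have hts : wordDist X t s ≤ 2 * R + 1 := by
      linarith [hX.wordDist_triangle t (γ i) s, hX.wordDist_triangle (γ i) (γ (i + 1)) s,
        hX.wordDist_comm t (γ i), hstep i hi]
    simp only [List.mem_append, List.mem_singleton]
    rintro x (hx | rfl)
    exacts [hlR x hx, hts]

theorem IsQuasiconvexSet.exists_isSymmGen (hX : IsSymmGen X) {A : Subgroup G} {R : ℕ}
    (hA : IsQuasiconvexSet (wordDist X) R (A : Set G)) :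
    ∃ Y : Set A, IsSymmGen Y ∧ ∀ a : A, wordLength Y a ≤ wordLength X (a : G) + 1 := by
  have hlist : ∀ a : A, ∃ l : List A, l.length ≤ wordLength X (a : G) + 1 ∧
      (∀ x ∈ l, wordLength X (x : G) ≤ 2 * R + 1) ∧ l.prod = a := by
    intro a
    obtain ⟨γ, hγ0, hγa, hγ⟩ := hX.isGeodesicMetric.exists_isGeodesic 1 (a : G)
    rw [wordDist_one_left] at hγa hγ
    refine hX.exists_list_of_near_path (n := wordLength X (a : G)) hγ0
      (fun i hi => ?_) (fun i hi => ?_) le_rfl a (by rw [hγa, wordDist_self]; exact Nat.zero_le R)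
    · rw [hγ i _ (Nat.le_succ i) hi]
      omega
    · refine hA 1 A.one_mem a a.2 (γ i) ?_
      simpa only [hγ0, hγa] using hγ.dist_add_dist (Nat.zero_le i) hi.le le_rfl
  refine ⟨{a | wordLength X (a : G) ≤ 2 * R + 1}, ⟨?_, fun a ha => ?_, ?_⟩, fun a => ?_⟩
  · exact (hX.finite_setOf_wordLength_le (2 * R + 1)).preimage Subtype.val_injective.injOn
  · exact (hX.wordLength_inv_le (a : G)).trans ha
  · refine eq_top_iff.2 fun a _ => ?_
    obtain ⟨l, -, hl, rfl⟩ := hlist a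
    exact Subgroup.list_prod_mem _ fun x hx => Subgroup.subset_closure (hl x hx)
  · obtain ⟨l, hl, hlR, rfl⟩ := hlist a
    exact (wordLength_prod_le hlR).trans hl

end Subgroups

section Cyclic

namespace IsHyperbolicMetric

variable {α : Type*} {d : α → α → ℕ} {D : ℕ}

theorem excess_le_of_perturb (h : IsHyperbolicMetric d D) {x y x' y' p : α} {e w : ℕ}
    (he : d x p + d p y ≤ d x y + e) (hx : d x x' ≤ w) (hy : d y y' ≤ w)
    (hxp : w + e + 2 * D < d x p) (hpy : w + e + 2 * D < d p y) :
    d x' p + d p y' ≤ d x' y' + (e + D + D) := by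
  have := h.dist_comm y' y
  rcases h.excess_split x' he with hbad | he'
  · omega
  rcases h.excess_split y' he' with hgood | hbad
  · exact hgood
  · omega

theorem exists_dist_le_of_fellow_travel (h : IsHyperbolicMetric d D) {γ : ℕ → α} {n M : ℕ}
    (hγ : IsGeodesic d γ n) {x y p : α} (hx : d x (γ 0) ≤ M) (hy : d y (γ n) ≤ M)
    (hp : d x p + d p y = d x y) (hxp : M + 2 * D < d x p) (hpy : M + 2 * D < d p y) :
    ∃ t ∈ Finset.Icc (d x p - M) (d x p + M), d p (γ t) ≤ D + D + D := by
  have he := h.excess_le_of_perturb (e := 0) hp.le hx hy (by omega) (by omega)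
  have hlen := hγ 0 n n.zero_le le_rfl
  have hle : min (d (γ 0) p) n ≤ n := min_le_right _ _
  have h0 := hγ 0 _ (Nat.zero_le _) hle
  refine ⟨min (d (γ 0) p) n, Finset.mem_Icc.2 ?_, ?_⟩
  · have := h.triangle x (γ 0) p
    have := h.triangle (γ 0) x p
    have := h.triangle x p y
    have := h.triangle x (γ 0) (γ n)
    have := h.triangle x (γ n) y
    have := h.dist_comm (γ 0) x
    have := h.dist_comm (γ n) y
    omega
  · refine (h.dist_le_of_excess he (hγ.dist_add_dist (Nat.zero_le _) hle le_rfl) ?_).trans ?_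
    · rw [h0, hlen]
      omega
    · omega

end IsHyperbolicMetric

variable {G : Type*} [Group G] {X : Set G} {D : ℕ} {z : G}

theorem IsSymmGen.card_le_of_forall_dist_le (hX : IsSymmGen X) {s : Finset G} {I : Finset ℕ}
    {γ : ℕ → G} {r : ℕ} (hs : ∀ p ∈ s, ∃ t ∈ I, wordDist X p (γ t) ≤ r) :
    s.card ≤ I.card * {g | wordLength X g ≤ r}.ncard := by
  classical
  rw [Set.ncard_eq_toFinset_card _ (hX.finite_setOf_wordLength_le r)]
  refine (Finset.card_le_card fun p hp => ?_).trans (Finset.card_image₂_le (γ · * ·) I _)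
  obtain ⟨t, ht, hpt⟩ := hs p hp
  refine Finset.mem_image₂.2 ⟨t, ht, (γ t)⁻¹ * p, ?_, mul_inv_cancel_left _ _⟩
  rw [hX.wordDist_comm] at hpt
  exact (Set.Finite.mem_toFinset _).2 hpt

theorem IsSymmGen.wordLength_pow_le (hX : IsSymmGen X) (g : G) (s : ℕ) :
    wordLength X (g ^ s) ≤ s * wordLength X g := by
  induction s with
  | zero => simp
  | succ s ih => rw [pow_succ]; linarith [hX.wordLength_mul_le (g ^ s) g]

theorem IsSymmGen.exists_lt_wordLength_pow (hX : IsSymmGen X) (hz : ¬ IsOfFinOrder z) (M : ℕ) :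
    ∃ N : ℕ, M < wordLength X (z ^ N) := by
  by_contra! hM
  exact Set.infinite_of_injective_forall_mem (injective_pow_iff_not_isOfFinOrder.2 hz) hM
    (hX.finite_setOf_wordLength_le M)

namespace IsHyperbolicMetric

/-- The translates by `z ^ k` of the midpoint of a long geodesic `[1, z ^ N]` lie near a short
central piece of that geodesic, so there cannot be many of them. -/
theorem exists_succ_le_of_forall_wordLength_pow_le (h : IsHyperbolicMetric (wordDist X) D)
    (hX : IsSymmGen X) (hz : ¬ IsOfFinOrder z) :
    ∃ β, ∀ K M, (∀ k ≤ K, wordLength X (z ^ k) ≤ M) → K + 1 ≤ (2 * M + 1) * β := by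
  classical
  refine ⟨{g | wordLength X g ≤ D + D + D}.ncard, fun K M hM => ?_⟩
  obtain ⟨N, hN⟩ := hX.exists_lt_wordLength_pow hz (4 * M + 4 * D + 4)
  obtain ⟨γ, hγ0, hγn, hγ⟩ := h.exists_isGeodesic 1 (z ^ N)
  obtain ⟨m, hm, hm'⟩ := h.exists_between 1 (z ^ N) (wordLength X (z ^ N) / 2)
    (by rw [wordDist_one_left]; omega)
  rw [wordDist_one_left (z ^ N)] at hm'
  have hxp : ∀ k, wordDist X (z ^ k) (z ^ k * m) = wordLength X (z ^ N) / 2 := fun k => by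
    rw [← hm, ← wordDist_mul_left (z ^ k) 1, mul_one]
  have hpy : ∀ k, wordDist X (z ^ k * m) (z ^ k * z ^ N) =
      wordLength X (z ^ N) - wordLength X (z ^ N) / 2 := fun k => by rw [wordDist_mul_left, hm']
  have hxy : ∀ k, wordDist X (z ^ k) (z ^ k * z ^ N) = wordLength X (z ^ N) := by simp [wordDist]
  have hinj : Function.Injective fun k : ℕ => z ^ k * m :=
    (mul_left_injective m).comp (injective_pow_iff_not_isOfFinOrder.2 hz)
  suffices hcard : ((Finset.range (K + 1)).image fun k => z ^ k * m).card ≤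
      (Finset.Icc (wordLength X (z ^ N) / 2 - M) (wordLength X (z ^ N) / 2 + M)).card *
        {g | wordLength X g ≤ D + D + D}.ncard by
    rw [Finset.card_image_of_injective _ hinj, Finset.card_range, Nat.card_Icc] at hcard
    refine hcard.trans ?_
    gcongr
    omega
  refine hX.card_le_of_forall_dist_le (γ := γ) fun p hp => ?_
  obtain ⟨k, hk, rfl⟩ := Finset.mem_image.1 hp
  have hkM := hM k (Nat.lt_succ_iff.1 (Finset.mem_range.1 hk))
  rw [← hxp k]
  refine h.exists_dist_le_of_fellow_travel hγ (y := z ^ k * z ^ N) ?_ ?_ ?_ ?_ ?_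
  · rwa [hγ0, h.dist_comm, wordDist_one_left]
  · rwa [hγn, h.dist_comm, (Commute.pow_pow_self z k N).eq, wordDist, inv_mul_cancel_left]
  all_goals
    have := hxp k
    have := hpy k
    have := hxy k
    omega

theorem exists_le_wordLength_pow (h : IsHyperbolicMetric (wordDist X) D) (hX : IsSymmGen X)
    (hz : ¬ IsOfFinOrder z) : ∃ l, ∀ n : ℕ, n ≤ l * wordLength X (z ^ n) := by
  obtain ⟨β, hβ⟩ := h.exists_succ_le_of_forall_wordLength_pow_le hX hz
  refine ⟨2 * β, fun n => ?_⟩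
  by_contra! hlt
  obtain ⟨B, hB⟩ := exists_wordLength_le_of_finite X ((Set.finite_Iio n).image fun k => z ^ k)
  have hM : ∀ s, ∀ k ≤ n * s, wordLength X (z ^ k) ≤ s * wordLength X (z ^ n) + B := by
    intro s k hk
    have hmod : k % n < n := Nat.mod_lt k (by omega)
    calc wordLength X (z ^ k) = wordLength X ((z ^ n) ^ (k / n) * z ^ (k % n)) := by
          rw [← pow_mul, ← pow_add, Nat.div_add_mod]
      _ ≤ wordLength X ((z ^ n) ^ (k / n)) + wordLength X (z ^ (k % n)) := hX.wordLength_mul_le _ _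
      _ ≤ k / n * wordLength X (z ^ n) + B :=
          add_le_add (hX.wordLength_pow_le _ _) (hB _ ⟨_, hmod, rfl⟩)
      _ ≤ s * wordLength X (z ^ n) + B := by
          gcongr
          exact Nat.div_le_of_le_mul hk
  have hcount := hβ _ _ (hM ((2 * B + 1) * β))
  have hgrow : (2 * β * wordLength X (z ^ n) + 1) * ((2 * B + 1) * β) ≤ n * ((2 * B + 1) * β) :=
    Nat.mul_le_mul_right _ hlt
  ring_nf at hcount hgrow
  omega

theorem exists_isQuasigeodesic_zpow (h : IsHyperbolicMetric (wordDist X) D) (hX : IsSymmGen X)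
    (hz : ¬ IsOfFinOrder z) :
    ∃ l, ∀ (a : ℤ) m, IsQuasigeodesic (wordDist X) (wordLength X z) l (fun i => z ^ (a + i)) m := by
  obtain ⟨l, hl⟩ := h.exists_le_wordLength_pow hX hz
  have hd : ∀ (a : ℤ) (i j : ℕ), i ≤ j →
      wordDist X (z ^ (a + i)) (z ^ (a + j)) = wordLength X (z ^ (j - i)) := by
    intro a i j hij
    rw [wordDist, ← zpow_neg, ← zpow_add, ← zpow_natCast, Nat.cast_sub hij]
    congr 2
    ring
  refine ⟨l, fun a m => ⟨fun i _ => ?_, fun i j hij _ => ?_⟩⟩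
  · rw [hd a i (i + 1) (Nat.le_add_right i 1), Nat.add_sub_cancel_left, pow_one]
  · rw [hd a i j hij]
    exact (hl _).trans (Nat.le_add_right _ _)

theorem exists_isQuasiconvexSet_zpowers (h : IsHyperbolicMetric (wordDist X) D)
    (hX : IsSymmGen X) (z : G) :
    ∃ R, IsQuasiconvexSet (wordDist X) R (Subgroup.zpowers z : Set G) := by
  by_cases hz : IsOfFinOrder z
  · exact hX.exists_isQuasiconvexSet_of_finite hz.finite_zpowers
  obtain ⟨l, hl⟩ := h.exists_isQuasigeodesic_zpow hX hz
  obtain ⟨R, hR⟩ := h.exists_forall_near_image_of_isQuasigeodesic (wordLength X z) l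
  refine ⟨R, ?_⟩
  rintro _ ⟨a, rfl⟩ _ ⟨b, rfl⟩ p hp
  beta_reduce at hp
  wlog hab : a ≤ b generalizing a b
  · refine this b a ?_ (le_of_not_ge hab)
    linarith [h.dist_comm (z ^ a) p, h.dist_comm (z ^ b) p, h.dist_comm (z ^ a) (z ^ b)]
  obtain ⟨m, rfl⟩ := Int.le.dest hab
  obtain ⟨_, ⟨i, -, rfl⟩, hi⟩ := hR _ _ (hl a m) p (by simpa using hp)
  exact ⟨_, ⟨_, rfl⟩, hi⟩

theorem exists_excess_pow_le (h : IsHyperbolicMetric (wordDist X) D) (hX : IsSymmGen X)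
    (hz : ¬ IsOfFinOrder z) : ∃ E, ∀ N : ℕ,
      wordDist X (z ^ N)⁻¹ 1 + wordDist X 1 (z ^ N) ≤ wordDist X (z ^ N)⁻¹ (z ^ N) + E := by
  obtain ⟨l, hl⟩ := h.exists_isQuasigeodesic_zpow hX hz
  obtain ⟨E, hE⟩ := h.exists_forall_excess_le_of_isQuasigeodesic (wordLength X z) l
  refine ⟨E, fun N => ?_⟩
  simpa [two_mul] using hE _ _ (hl (-N) (2 * N)) N (by omega)

theorem exists_near_one_preimage_of_conj_pow_mem (h : IsHyperbolicMetric (wordDist X) D)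
    (hX : IsSymmGen X) (hz : ¬ IsOfFinOrder z) {C : Subgroup G} {R : ℕ}
    (hC : IsQuasiconvexSet (wordDist X) R (C : Set G)) :
    ∃ R', ∀ g, (∃ a : ℕ, 0 < a ∧ g⁻¹ * z ^ a * g ∈ C) →
      Near (wordDist X) R' ((g⁻¹ * ·) ⁻¹' C) 1 := by
  obtain ⟨l, hl⟩ := h.exists_le_wordLength_pow hX hz
  obtain ⟨E, hE⟩ := h.exists_excess_pow_le hX hz
  refine ⟨R + ((E + D + D) + 4 * 0 + D), fun g ⟨a, ha, hag⟩ => ?_⟩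
  set n := l * (wordLength X g + E + 2 * D) + 1
  have hlong : wordLength X g + E + 2 * D < wordLength X (z ^ (a * n)) :=
    lt_of_mul_lt_mul_left ((Nat.lt_succ_self _).trans_le
      ((Nat.le_mul_of_pos_left n ha).trans (hl (a * n)))) (Nat.zero_le l)
  have hmem : g⁻¹ * (z ^ (a * n) * g) ∈ C := by
    have hconj : (g⁻¹ * z ^ a * g) ^ n = g⁻¹ * (z ^ (a * n) * g) := by
      simpa [pow_mul, mul_assoc] using conj_pow (a := g⁻¹) (b := z ^ a) (i := n)
    exact hconj ▸ C.pow_mem hag n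
  have hmem' : g⁻¹ * ((z ^ (a * n))⁻¹ * g) ∈ C := by simpa [mul_assoc] using C.inv_mem hmem
  refine h.near_of_isQuasiconvexSet (hC.preimage_mul_left g⁻¹)
    (h.near_of_mem 0 hmem') (h.near_of_mem 0 hmem)
    (h.excess_le_of_perturb (hE (a * n)) (w := wordLength X g) ?_ ?_ ?_ ?_)
  · simp [wordDist]
  · simp [wordDist]
  · rwa [h.dist_comm, wordDist_one_left, hX.wordLength_inv]
  · rwa [wordDist_one_left]

end IsHyperbolicMetric

end Cyclic

section VirtuallyCyclic

open scoped Pointwise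

variable {G : Type*} [Group G] {X : Set G} {D : ℕ} {C : Subgroup G}

theorem exists_forall_near_of_relIndex_ne_zero (X : Set G) {K : Subgroup G}
    (hKC : K.relIndex C ≠ 0) : ∃ r, ∀ c ∈ C, Near (wordDist X) r K c := by
  have : (K.subgroupOf C).FiniteIndex := ⟨hKC⟩
  obtain ⟨r, hr⟩ := exists_wordLength_le_of_finite X
    (Set.finite_range fun q : C ⧸ K.subgroupOf C => (q.out : G))
  refine ⟨r, fun c hc => ?_⟩
  obtain ⟨k, hk⟩ := QuotientGroup.mk_out_eq_mul (K.subgroupOf C) (⟨c, hc⟩⁻¹ : C)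
  refine ⟨(k : C), k.2, hr _ ⟨((⟨c, hc⟩⁻¹ : C) : C ⧸ K.subgroupOf C), ?_⟩⟩
  exact congrArg Subtype.val hk

theorem relIndex_ne_zero_of_finite_cover {M : Subgroup G} {T : Set G} (hT : T.Finite)
    (hcov : ∀ g ∈ M, ∃ t ∈ T, g⁻¹ * t ∈ C) : C.relIndex M ≠ 0 := by
  have : Finite T := hT
  choose t ht htC using fun q : M ⧸ C.subgroupOf M => hcov q.out q.out.2
  have hinj : Function.Injective fun q => (⟨t q, ht q⟩ : T) := by
    intro q q' hqq
    rw [← q.out_eq', ← q'.out_eq', QuotientGroup.eq, Subgroup.mem_subgroupOf]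
    have htt : t q = t q' := congrArg Subtype.val hqq
    simpa [htt] using C.mul_mem (htC q) (C.inv_mem (htC q'))
  have := Finite.of_injective _ hinj
  exact (Subgroup.finiteIndex_of_finite_quotient (H := C.subgroupOf M)).index_ne_zero

theorem relIndex_zpowers_zpow_ne_zero (z : G) {a : ℤ} (ha : a ≠ 0) :
    (Subgroup.zpowers (z ^ a)).relIndex (Subgroup.zpowers z) ≠ 0 := by
  refine relIndex_ne_zero_of_finite_cover ((Set.finite_Ico 0 |a|).image fun k : ℤ => z ^ k) ?_
  rintro _ ⟨k, rfl⟩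
  refine ⟨z ^ (k % a), ⟨_, ⟨Int.emod_nonneg _ ha, Int.emod_lt_abs _ ha⟩, rfl⟩, -(k / a), ?_⟩
  beta_reduce
  rw [← zpow_neg, ← zpow_add, ← zpow_mul, Int.emod_def]
  congr 1
  ring

theorem mem_conj_smul_iff {g x : G} : x ∈ MulAut.conj g • C ↔ g⁻¹ * x * g ∈ C := by
  simp [Subgroup.mem_pointwise_smul_iff_inv_smul_mem, MulAut.smul_def]

theorem mem_commensurator_iff {g : G} :
    g ∈ Subgroup.Commensurable.commensurator C ↔ (MulAut.conj g • C).Commensurable C :=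
  Subgroup.Commensurable.commensurator_mem_iff C g

namespace IsVirtuallyCyclic

theorem exists_relIndex_zpowers_ne_zero (hC : IsVirtuallyCyclic C) :
    ∃ z ∈ C, (Subgroup.zpowers z).relIndex C ≠ 0 := by
  obtain ⟨Z, hZ, hfin⟩ := hC
  obtain ⟨z, rfl⟩ := Z.isCyclic_iff_exists_zpowers_eq_top.1 hZ
  refine ⟨z, z.2, ?_⟩
  rw [← C.coe_subtype, ← MonoidHom.map_zpowers, Subgroup.relIndex, Subgroup.subgroupOf,
    Subgroup.comap_map_eq_self_of_injective C.subtype_injective]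
  exact hfin.index_ne_zero

theorem relIndex_ne_zero_of_infinite (hC : IsVirtuallyCyclic C) {K : Subgroup G}
    [Infinite ↥(K ⊓ C)] : K.relIndex C ≠ 0 := by
  obtain ⟨z, -, hz⟩ := hC.exists_relIndex_zpowers_ne_zero
  have hne : Subgroup.zpowers z ⊓ (K ⊓ C) ≠ ⊥ := fun hbot => by
    have hz' : (Subgroup.zpowers z).relIndex (K ⊓ C) ≠ 0 :=
      mt (Subgroup.relIndex_eq_zero_of_le_right inf_le_right) hz
    rw [← Subgroup.inf_relIndex_right, hbot, Subgroup.relIndex_bot_left] at hz'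
    exact hz' Nat.card_eq_zero_of_infinite
  obtain ⟨y, ⟨⟨a, rfl⟩, hy⟩, hy1⟩ := (Subgroup.bot_or_exists_ne_one _).resolve_left hne
  have ha : a ≠ 0 := by rintro rfl; simp at hy1
  exact mt (Subgroup.relIndex_eq_zero_of_le_left (Subgroup.zpowers_le.2 hy.1))
    (Subgroup.relIndex_ne_zero_trans (relIndex_zpowers_zpow_ne_zero z ha) hz)

theorem exists_isQuasiconvexSet (hC : IsVirtuallyCyclic C)
    (h : IsHyperbolicMetric (wordDist X) D) (hX : IsSymmGen X) :
    ∃ R, IsQuasiconvexSet (wordDist X) R (C : Set G) := by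
  obtain ⟨z, hz, hzC⟩ := hC.exists_relIndex_zpowers_ne_zero
  obtain ⟨R, hR⟩ := h.exists_isQuasiconvexSet_zpowers hX z
  obtain ⟨r, hr⟩ := exists_forall_near_of_relIndex_ne_zero X hzC
  exact hR.exists_of_near h (Subgroup.zpowers_le.2 hz) hr

theorem relIndex_commensurator_ne_zero (hC : IsVirtuallyCyclic C) [Infinite C]
    (h : IsHyperbolicMetric (wordDist X) D) (hX : IsSymmGen X) :
    C.relIndex (Subgroup.Commensurable.commensurator C) ≠ 0 := by
  obtain ⟨z, hz, hzC⟩ := hC.exists_relIndex_zpowers_ne_zero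
  have hord : ¬ IsOfFinOrder z := fun hfin => by
    have := hfin.finite_zpowers.to_subtype
    have := Subgroup.relIndex_ne_zero_trans (K := Subgroup.zpowers z) (H := ⊥)
      (by rw [Subgroup.relIndex_bot_left]; exact Nat.card_pos.ne') hzC
    rw [Subgroup.relIndex_bot_left] at this
    exact this Nat.card_eq_zero_of_infinite
  obtain ⟨R, hR⟩ := hC.exists_isQuasiconvexSet h hX
  obtain ⟨R', hR'⟩ := h.exists_near_one_preimage_of_conj_pow_mem hX hord hR
  refine relIndex_ne_zero_of_finite_cover (hX.finite_setOf_wordLength_le R') fun g hg => ?_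
  obtain ⟨a, ha, -, hag⟩ := Subgroup.exists_pow_mem_of_relIndex_ne_zero
    (mem_commensurator_iff.1 hg).1 hz
  obtain ⟨t, ht, hgt⟩ := hR' g ⟨a, ha, mem_conj_smul_iff.1 hag.1⟩
  exact ⟨t, by simpa using hgt, ht⟩

theorem mem_commensurator_of_infinite (hC : IsVirtuallyCyclic C) {g : G}
    [Infinite ↥(C ⊓ MulAut.conj g • C)] : g ∈ Subgroup.Commensurable.commensurator C := by
  have hconj : MulAut.conj g⁻¹ • (C ⊓ MulAut.conj g • C) = MulAut.conj g⁻¹ • C ⊓ C := by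
    rw [Subgroup.smul_inf, smul_smul, ← map_mul, inv_mul_cancel, map_one, one_smul]
  have : Infinite ↥(MulAut.conj g⁻¹ • C ⊓ C) :=
    hconj ▸ Infinite.of_injective _ (Subgroup.equivSMul (MulAut.conj g⁻¹) _).injective
  have : Infinite ↥(MulAut.conj g • C ⊓ C) := by rwa [inf_comm]
  refine mem_commensurator_iff.2 ⟨hC.relIndex_ne_zero_of_infinite, ?_⟩
  have := hC.relIndex_ne_zero_of_infinite (K := MulAut.conj g⁻¹ • C)
  rw [← Subgroup.relIndex_pointwise_smul (MulAut.conj g), smul_smul, ← map_mul] at this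
  simpa using this

theorem exists_relIndex_ne_zero_forall_finite_inf_conj (hC : IsVirtuallyCyclic C)
    (h : IsHyperbolicMetric (wordDist X) D) (hX : IsSymmGen X) :
    ∃ M : Subgroup G, C.relIndex M ≠ 0 ∧ ∀ g ∉ M, Finite ↥(C ⊓ MulAut.conj g • C) := by
  rcases finite_or_infinite C with hfin | hinf
  · exact ⟨⊥, by simp, fun g _ => Finite.of_injective _ (Subgroup.inclusion_injective inf_le_left)⟩
  · refine ⟨_, hC.relIndex_commensurator_ne_zero h hX, fun g hg => ?_⟩
    by_contra hfin
    have := not_finite_iff_infinite.1 hfin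
    exact hg hC.mem_commensurator_of_infinite

end IsVirtuallyCyclic

theorem le_relIndex_of_pairwise_notMem {M : Subgroup G} (hM : C.relIndex M ≠ 0) {n : ℕ} {s : ℕ → G}
    (hs : ∀ i < n, s i ∈ M) (hsC : ∀ i k, i < k → k < n → (s i)⁻¹ * s k ∉ C) :
    n ≤ C.relIndex M := by
  have : Finite (M ⧸ C.subgroupOf M) := Nat.finite_of_card_ne_zero hM
  rw [Subgroup.relIndex, Subgroup.index, ← Nat.card_fin n]
  refine Nat.card_le_card_of_injective
    (fun i : Fin n => ((⟨s i, hs i i.2⟩ : M) : M ⧸ C.subgroupOf M)) fun i k hik => ?_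
  have hmem : (s i)⁻¹ * s k ∈ C := by
    beta_reduce at hik
    rw [QuotientGroup.eq] at hik
    exact hik
  refine le_antisymm (not_lt.1 fun hki => hsC k i hki i.2 ?_)
    (not_lt.1 fun hik => hsC i k hik k.2 hmem)
  simpa using C.inv_mem hmem

end VirtuallyCyclic

section Amalgam

variable {G : Type*} [Group G] {A : Bool → Subgroup G} {C : Subgroup G}

/-- `g` is a nonempty product of elements taken alternately from `A true \ C` and `A false \ C`,
the first one from `A i` and the last one from `A j`. -/
inductive IsReducedProd (A : Bool → Subgroup G) (C : Subgroup G) : Bool → Bool → G → Prop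
  | single {i : Bool} {a : G} : a ∈ A i → a ∉ C → IsReducedProd A C i i a
  | snoc {i j k : Bool} {g a : G} :
      IsReducedProd A C i j g → j ≠ k → a ∈ A k → a ∉ C → IsReducedProd A C i k (g * a)

namespace IsReducedProd

variable {i j k l : Bool} {g g' : G}

theorem mul (hg : IsReducedProd A C i j g) (hg' : IsReducedProd A C k l g') (hjk : j ≠ k) :
    IsReducedProd A C i l (g * g') := by
  induction hg' with
  | single ha haC => exact hg.snoc hjk ha haC
  | snoc _ hne ha haC ih =>
    rw [← mul_assoc]
    exact ih.snoc hne ha haC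

theorem inv (hg : IsReducedProd A C i j g) : IsReducedProd A C j i g⁻¹ := by
  induction hg with
  | single ha haC => exact .single (inv_mem ha) (by simpa using haC)
  | snoc _ hne ha haC ih =>
    rw [mul_inv_rev]
    exact (single (inv_mem ha) (by simpa using haC)).mul ih hne.symm

theorem mul_mem_right (hg : IsReducedProd A C i j g) (hCA : C ≤ A j) {c : G} (hc : c ∈ C) :
    IsReducedProd A C i j (g * c) := by
  cases hg with
  | single ha haC => exact .single (mul_mem ha (hCA hc)) (by rwa [C.mul_mem_cancel_right hc])
  | snoc hg hne ha haC =>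
    rw [mul_assoc]
    exact hg.snoc hne (mul_mem ha (hCA hc)) (by rwa [C.mul_mem_cancel_right hc])

theorem mul_mem_or (hg : IsReducedProd A C i j g) (hCA : ∀ i, C ≤ A i) {x : G} (hx : x ∈ A k) :
    g * x ∈ C ∨ ∃ l, IsReducedProd A C i l (g * x) := by
  by_cases hxC : x ∈ C
  · exact .inr ⟨j, hg.mul_mem_right (hCA j) hxC⟩
  obtain rfl | hjk := eq_or_ne j k
  · cases hg with
    | single ha haC => exact or_iff_not_imp_left.2 fun hax => ⟨_, .single (mul_mem ha hx) hax⟩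
    | @snoc i' _ g a hg hne ha haC =>
      rw [mul_assoc]
      by_cases hax : a * x ∈ C
      · exact .inr ⟨_, hg.mul_mem_right (hCA i') hax⟩
      · exact .inr ⟨_, hg.snoc hne (mul_mem ha hx) hax⟩
  · exact .inr ⟨_, hg.snoc hjk hx hxC⟩

theorem mem_or_exists_inv_mul (hg : IsReducedProd A C i j g) :
    (j = i ∧ g ∈ A i) ∨ ∃ e ∈ A i, ∃ k ≠ i, IsReducedProd A C k j (e⁻¹ * g) := by
  induction hg with
  | single ha _ => exact .inl ⟨rfl, ha⟩
  | snoc hg hne ha haC ih =>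
    rcases ih with ⟨rfl, hgi⟩ | ⟨e, he, k, hk, hr⟩
    · exact .inr ⟨_, hgi, _, hne.symm, by simpa using single ha haC⟩
    · exact .inr ⟨e, he, k, hk, by simpa only [mul_assoc] using hr.snoc hne ha haC⟩

theorem exists_neWord (hg : IsReducedProd A C i j g) :
    ∃ w : Monoid.CoprodI.NeWord (fun i => A i) i j, (∀ x ∈ w.toList, (x.2 : G) ∉ C) ∧
      Monoid.CoprodI.lift (fun i => (A i).subtype) w.prod = g := by
  have ne_one : ∀ {k} {a : A k}, (a : G) ∉ C → a ≠ 1 := fun ha h => ha (h ▸ C.one_mem)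
  induction hg with
  | @single a ha haC =>
    exact ⟨.singleton ⟨a, ha⟩ (ne_one haC), by simpa using haC, by simp⟩
  | @snoc j k g a hg hne ha haC ih =>
    obtain ⟨w, hw, rfl⟩ := ih
    refine ⟨w.append hne (.singleton ⟨a, ha⟩ (ne_one haC)), ?_, by simp⟩
    simp only [Monoid.CoprodI.NeWord.toList, List.mem_append, List.mem_singleton]
    rintro x (hx | rfl)
    exacts [hw x hx, haC]

end IsReducedProd

namespace IsAmalgamatedFreeProduct

theorem le (amal : IsAmalgamatedFreeProduct (A true) (A false) C) : ∀ i, C ≤ A i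
  | true => amal.le_left
  | false => amal.le_right

theorem mem_or_exists_isReducedProd (amal : IsAmalgamatedFreeProduct (A true) (A false) C) (g : G) :
    g ∈ C ∨ ∃ i j, IsReducedProd A C i j g := by
  have hg : g ∈ A true ⊔ A false := amal.sup_eq_top ▸ Subgroup.mem_top g
  have step : ∀ x k, ∀ y ∈ A k, (x ∈ C ∨ ∃ i j, IsReducedProd A C i j x) →
      x * y ∈ C ∨ ∃ i j, IsReducedProd A C i j (x * y) := by
    rintro x k y hy (hx | ⟨i, j, hx⟩)
    · exact or_iff_not_imp_left.2 fun hxy => ⟨k, k, .single (mul_mem (amal.le k hx) hy) hxy⟩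
    · exact (hx.mul_mem_or amal.le hy).imp_right fun h => ⟨i, h⟩
  rw [Subgroup.sup_eq_closure] at hg
  induction hg using Subgroup.closure_induction_right with
  | one => exact .inl C.one_mem
  | mul_right x _ y hy ih => exact hy.elim (step x _ y · ih) (step x _ y · ih)
  | mul_inv_cancel x _ y hy ih =>
    exact hy.elim (fun h => step x _ _ (inv_mem h) ih) fun h => step x _ _ (inv_mem h) ih

theorem exists_isReducedProd_of_notMem (amal : IsAmalgamatedFreeProduct (A true) (A false) C)
    {i : Bool} {g : G} (hg : g ∉ A i) :
    ∃ e ∈ A i, ∃ k ≠ i, ∃ l, IsReducedProd A C k l (e⁻¹ * g) := by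
  obtain ⟨k, l, hr⟩ := (amal.mem_or_exists_isReducedProd g).resolve_left fun h => hg (amal.le i h)
  obtain rfl | hk := eq_or_ne k i
  · obtain ⟨e, he, m, hm, hr⟩ := hr.mem_or_exists_inv_mul.resolve_left fun h => hg h.2
    exact ⟨e, he, m, hm, l, hr⟩
  · exact ⟨1, one_mem _, k, hk, l, by simpa using hr⟩

theorem exists_hom_pushout (amal : IsAmalgamatedFreeProduct (A true) (A false) C) :
    ∃ f : G →* Monoid.PushoutI fun i => Subgroup.inclusion (amal.le i),
      (f.comp (Monoid.CoprodI.lift fun i => (A i).subtype) = Monoid.PushoutI.ofCoprodI) ∧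
        ∀ c : C, f c = Monoid.PushoutI.base _ c := by
  let φ := fun i => Subgroup.inclusion (amal.le i)
  obtain ⟨f, htrue, hfalse⟩ := amal.univ (Monoid.PushoutI φ) (Monoid.PushoutI.of (φ := φ) true)
    (Monoid.PushoutI.of (φ := φ) false) fun c hA hB => by
      have hc : c ∈ C := amal.inf_eq ▸ ⟨hA, hB⟩
      exact (Monoid.PushoutI.of_apply_eq_base φ true ⟨c, hc⟩).trans
        (Monoid.PushoutI.of_apply_eq_base φ false ⟨c, hc⟩).symm
  refine ⟨f, Monoid.CoprodI.ext_hom _ _ ?_, fun c => ?_⟩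
  · rintro (_ | _) <;> ext a
    · simpa using hfalse a
    · simpa using htrue a
  · exact (htrue ⟨c, amal.le true c.2⟩).trans (Monoid.PushoutI.of_apply_eq_base φ true c)

end IsAmalgamatedFreeProduct

namespace IsReducedProd

variable {i j k l : Bool} {g : G}

/-- Normal form theorem for amalgamated free products. -/
theorem notMem (hg : IsReducedProd A C i j g)
    (amal : IsAmalgamatedFreeProduct (A true) (A false) C) : g ∉ C := by
  obtain ⟨f, hf, hfC⟩ := amal.exists_hom_pushout
  obtain ⟨w, hw, rfl⟩ := hg.exists_neWord
  intro hgC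
  have hred : Monoid.PushoutI.Reduced (fun i => Subgroup.inclusion (amal.le i)) w.toWord := by
    rintro x hx ⟨c, hc⟩
    exact hw x hx (hc ▸ c.2)
  have hempty := hred.eq_empty_of_mem_range (fun i => Subgroup.inclusion_injective _)
    ⟨⟨_, hgC⟩, (hfC _).symm.trans (DFunLike.congr_fun hf w.prod)⟩
  exact w.toList_ne_nil (congrArg Monoid.CoprodI.Word.toList hempty)

theorem fst_unique (hg : IsReducedProd A C i j g) (hg' : IsReducedProd A C k l g)
    (amal : IsAmalgamatedFreeProduct (A true) (A false) C) : i = k := by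
  by_contra hne
  exact (hg.inv.mul hg' hne).notMem amal (by simp)

theorem notMem_of_ne (hg : IsReducedProd A C i j g)
    (amal : IsAmalgamatedFreeProduct (A true) (A false) C) (hik : i ≠ k) : g ∉ A k := fun h =>
  hik (hg.fst_unique (.single h (hg.notMem amal)) amal)

end IsReducedProd

/-- `a` and `b` are joined by a path in `V` whose steps are elements of the factors. -/
def Linked (A : Bool → Subgroup G) (V : Set G) : G → G → Prop :=
  Relation.ReflTransGen fun x y => x ∈ V ∧ y ∈ V ∧ ∃ k, x⁻¹ * y ∈ A k

namespace Linked

variable {V W : Set G} {a b g : G}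

theorem mono (h : Linked A V a b) (hVW : V ⊆ W) : Linked A W a b :=
  Relation.ReflTransGen.mono (fun _ _ h => ⟨hVW h.1, hVW h.2.1, h.2.2⟩) _ _ h

theorem symm (h : Linked A V a b) : Linked A V b a := by
  have : Std.Symm fun x y => x ∈ V ∧ y ∈ V ∧ ∃ k, x⁻¹ * y ∈ A k :=
    ⟨fun x y ⟨hx, hy, k, hk⟩ => ⟨hy, hx, k, by simpa using inv_mem hk⟩⟩
  exact Relation.ReflTransGen.stdSymm.symm _ _ h

theorem mul_left (h : Linked A V a b) (hV : ∀ x ∈ V, g * x ∈ V) :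
    Linked A V (g * a) (g * b) :=
  Relation.ReflTransGen.lift (g * ·)
    (fun x y h => ⟨hV _ h.1, hV _ h.2.1, by simpa [mul_assoc] using h.2.2⟩) _ _ h

theorem of_steps {γ : ℕ → G} {s e : ℕ} (hse : s ≤ e)
    (hγ : ∀ t, s ≤ t → t < e → ∃ k, (γ t)⁻¹ * γ (t + 1) ∈ A k) :
    Linked A (γ '' Set.Icc s e) (γ s) (γ e) := by
  induction e, hse using Nat.le_induction with
  | base => exact .refl
  | succ t hst ih =>
    have hlink := (ih fun u hu hut => hγ u hu (Nat.lt_succ_of_lt hut)).mono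
      (Set.image_mono (Set.Icc_subset_Icc_right (Nat.le_add_right t 1)))
    exact hlink.tail ⟨⟨t, ⟨hst, by omega⟩, rfl⟩, ⟨t + 1, ⟨by omega, le_rfl⟩, rfl⟩,
      hγ t hst (by omega)⟩

theorem exists_inv_mul_mem (h : Linked A V a b) (hCA : ∀ i, C ≤ A i) {k l : Bool}
    (hb : IsReducedProd A C k l (g⁻¹ * b)) (ha : ∀ l, ¬ IsReducedProd A C k l (g⁻¹ * a)) :
    ∃ v ∈ V, g⁻¹ * v ∈ C := by
  induction h generalizing l with
  | refl => exact (ha l hb).elim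
  | @tail b c _ hbc ih =>
    obtain ⟨hbV, -, m, hm⟩ := hbc
    rcases hb.mul_mem_or hCA (inv_mem hm) with h | ⟨l', h⟩
    · exact ⟨b, hbV, by simpa [mul_assoc] using h⟩
    · exact ih (by simpa [mul_assoc] using h)

end Linked

/-- The points `q 0, …, q N` are the partial products, up to left translation, of a reduced
product of `N` factors, the `k`-th of which lies in `A (ι k)`. -/
structure IsReducedSeq (A : Bool → Subgroup G) (C : Subgroup G) (N : ℕ) (q : ℕ → G)
    (ι : ℕ → Bool) : Prop where
  step_mem : ∀ k < N, (q k)⁻¹ * q (k + 1) ∈ A (ι k)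
  step_notMem : ∀ k < N, (q k)⁻¹ * q (k + 1) ∉ C
  alternate : ∀ k, k + 1 < N → ι k ≠ ι (k + 1)

/-- The points `q 0, …, q N` lie in distinct left cosets of `C`, successive ones in the same left
coset of a factor. -/
structure IsCosetChain (A : Bool → Subgroup G) (C : Subgroup G) (N : ℕ) (q : ℕ → G)
    (ι : ℕ → Bool) : Prop where
  step_mem : ∀ k < N, (q k)⁻¹ * q (k + 1) ∈ A (ι k)
  notMem : ∀ k l, k < l → l ≤ N → (q k)⁻¹ * q l ∉ C

theorem IsReducedProd.exists_isReducedSeq {i j : Bool} {g : G} (hg : IsReducedProd A C i j g) :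
    ∃ N q ι, IsReducedSeq A C (N + 1) q ι ∧ q 0 = 1 ∧ q (N + 1) = g ∧ ι N = j := by
  induction hg with
  | @single a ha haC =>
    refine ⟨0, fun n => if n = 0 then 1 else a, fun _ => i, ⟨?_, ?_, by simp⟩, by simp, by simp,
      rfl⟩ <;> simpa
  | @snoc j k g a _ hne ha haC ih =>
    obtain ⟨N, q, ι, hq, hq0, rfl, rfl⟩ := ih
    have hmem : ∀ m ≤ N + 1, (if m ≤ N + 1 then q m else q (N + 1) * a) = q m :=
      fun m hm => if_pos hm
    refine ⟨N + 1, fun m => if m ≤ N + 1 then q m else q (N + 1) * a,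
      fun m => if m ≤ N then ι m else k, ⟨fun m hm => ?_, fun m hm => ?_, fun m hm => ?_⟩,
      by simp [hq0], by simp, by simp⟩
    · rcases Nat.lt_succ_iff_lt_or_eq.1 hm with hm | rfl
      · simpa [hm.le, Nat.le_of_lt_succ hm] using hq.step_mem m hm
      · simpa using ha
    · rcases Nat.lt_succ_iff_lt_or_eq.1 hm with hm | rfl
      · simpa [hm.le, Nat.le_of_lt_succ hm] using hq.step_notMem m hm
      · simpa using haC
    · rcases Nat.lt_succ_iff_lt_or_eq.1 (Nat.lt_of_succ_lt_succ hm) with hm | rfl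
      · simpa [hm.le, Nat.succ_le_of_lt hm] using hq.alternate m (Nat.succ_lt_succ hm)
      · simpa using hne

namespace IsReducedSeq

variable {N : ℕ} {q : ℕ → G} {ι : ℕ → Bool}

theorem isReducedProd (hq : IsReducedSeq A C N q ι) {k l : ℕ} (hkl : k ≤ l) (hl : l < N) :
    IsReducedProd A C (ι k) (ι l) ((q k)⁻¹ * q (l + 1)) := by
  induction l, hkl using Nat.le_induction with
  | base => exact .single (hq.step_mem k hl) (hq.step_notMem k hl)
  | succ l _ ih =>
    simpa [mul_assoc] using (ih (Nat.lt_of_succ_lt hl)).snoc (hq.alternate l hl)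
      (hq.step_mem _ hl) (hq.step_notMem _ hl)

theorem isCosetChain (hq : IsReducedSeq A C N q ι)
    (amal : IsAmalgamatedFreeProduct (A true) (A false) C) : IsCosetChain A C N q ι where
  step_mem := hq.step_mem
  notMem k l hkl hl := by
    obtain ⟨l, rfl⟩ := Nat.exists_eq_add_one_of_ne_zero (Nat.ne_zero_of_lt hkl)
    exact (hq.isReducedProd (Nat.le_of_lt_succ hkl) hl).notMem amal

theorem exists_inv_mul_mem (hq : IsReducedSeq A C N q ι)
    (amal : IsAmalgamatedFreeProduct (A true) (A false) C) {V : Set G}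
    (hV : Linked A V (q 0) (q N)) (h0 : q 0 ∈ V) (hN : q N ∈ V) {k : ℕ} (hk : k ≤ N) :
    ∃ v ∈ V, (q k)⁻¹ * v ∈ C := by
  obtain rfl | hlt := hk.eq_or_lt
  · exact ⟨q k, hN, by simp⟩
  obtain _ | k := k
  · exact ⟨q 0, h0, by simp⟩
  obtain ⟨N, rfl⟩ := Nat.exists_eq_add_one_of_ne_zero (Nat.ne_zero_of_lt hlt)
  refine hV.exists_inv_mul_mem amal.le (hq.isReducedProd (Nat.le_of_lt_succ hlt) N.lt_succ_self)
    fun l hl => hq.alternate k hlt ?_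
  have hback := (hq.isReducedProd (Nat.zero_le k) (Nat.lt_of_succ_lt hlt)).inv
  rw [mul_inv_rev, inv_inv] at hback
  exact hback.fst_unique hl amal

end IsReducedSeq

theorem IsCosetChain.congr {N : ℕ} {q q' : ℕ → G} {ι : ℕ → Bool} (hq : IsCosetChain A C N q ι)
    (hCA : ∀ i, C ≤ A i) (hqq' : ∀ k ≤ N, (q k)⁻¹ * q' k ∈ C) : IsCosetChain A C N q' ι where
  step_mem k hk := by
    have hk' := hCA (ι k) (C.inv_mem (hqq' k hk.le))
    simpa [mul_assoc] using
      mul_mem (mul_mem hk' (hq.step_mem k hk)) (hCA (ι k) (hqq' (k + 1) hk))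
  notMem k l hkl hl hmem := hq.notMem k l hkl hl <| by
    simpa [mul_assoc] using
      mul_mem (mul_mem (hqq' k (hkl.le.trans hl)) hmem) (C.inv_mem (hqq' l hl))

theorem IsAmalgamatedFreeProduct.exists_isCosetChain
    (amal : IsAmalgamatedFreeProduct (A true) (A false) C) {g : G} (hg : g ∉ C) :
    ∃ N q ι, IsCosetChain A C N q ι ∧ q 0 = 1 ∧ q N = g ∧
      ∀ V, Linked A V 1 g → 1 ∈ V → g ∈ V → ∀ k ≤ N, ∃ v ∈ V, (q k)⁻¹ * v ∈ C := by
  obtain ⟨i, j, hr⟩ := (amal.mem_or_exists_isReducedProd g).resolve_left hg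
  obtain ⟨N, q, ι, hq, hq0, rfl, -⟩ := hr.exists_isReducedSeq
  refine ⟨N + 1, q, ι, hq.isCosetChain amal, hq0, rfl, fun V hV h1 hgV k hk => ?_⟩
  rw [← hq0] at hV h1
  exact hq.exists_inv_mul_mem amal hV h1 hgV hk

end Amalgam

section Factors

variable {G : Type*} [Group G] {A : Bool → Subgroup G} {C : Subgroup G} {X : Set G} {D : ℕ}

theorem IsSymmGen.iUnion_image_subtype {Y : ∀ i, Set (A i)} (hY : ∀ i, IsSymmGen (Y i))
    (hA : A true ⊔ A false = ⊤) : IsSymmGen (⋃ i, (A i).subtype '' Y i) := by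
  refine ⟨Set.finite_iUnion fun i => (hY i).1.image _, fun x hx => ?_, ?_⟩
  · obtain ⟨i, y, hy, rfl⟩ := Set.mem_iUnion.1 hx
    exact Set.mem_iUnion.2 ⟨i, y⁻¹, (hY i).2.1 y hy, by simp⟩
  · have hclosure : ∀ i, Subgroup.closure ((A i).subtype '' Y i) = A i := fun i => by
      rw [← MonoidHom.map_closure, (hY i).2.2, ← MonoidHom.range_eq_map, Subgroup.range_subtype]
    rw [Subgroup.closure_iUnion, iSup_congr hclosure, iSup_bool_eq, hA]

theorem IsWordHyperbolic.exists_isHyperbolicMetric_of_isSymmGen (hG : IsWordHyperbolic G)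
    (hX : IsSymmGen X) : ∃ D, IsHyperbolicMetric (wordDist X) D := by
  obtain ⟨X₀, hX₀, D, h⟩ := hG.exists_isHyperbolicMetric
  obtain ⟨L, hL⟩ := hX₀.exists_wordLength_map_le hX (MonoidHom.id G)
  exact h.exists_isHyperbolicMetric_of_map hX₀ hX (MonoidHom.id G) (c := L)
    fun k => (hL k).trans (Nat.le_add_right _ _)

theorem IsGeodesic.linked {γ : ℕ → G} {n s e : ℕ} (hγ : IsGeodesic (wordDist X) γ n)
    (hX : IsSymmGen X) (hXA : ∀ x ∈ X, ∃ k, x ∈ A k) (hse : s ≤ e) (he : e ≤ n) :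
    Linked A (γ '' Set.Icc s e) (γ s) (γ e) := by
  refine .of_steps hse fun t _ ht => hXA _ (hX.mem_of_wordLength_eq_one ?_)
  exact (hγ t (t + 1) (by omega) (by omega)).trans (by omega)

theorem IsAmalgamatedFreeProduct.isQuasiconvexSet_factor
    (amal : IsAmalgamatedFreeProduct (A true) (A false) C) (hX : IsSymmGen X)
    (hXA : ∀ x ∈ X, ∃ k, x ∈ A k) {R : ℕ} (hC : IsQuasiconvexSet (wordDist X) R (C : Set G))
    (i : Bool) : IsQuasiconvexSet (wordDist X) R (A i : Set G) := by
  intro x hx y hy p hp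
  by_cases hpA : p ∈ A i
  · exact hX.isGeodesicMetric.near_of_mem R hpA
  obtain ⟨e, he, k, hk, l, hr⟩ := amal.exists_isReducedProd_of_notMem hpA
  have inside : ∀ a ∈ A i, ∀ l, ¬ IsReducedProd A C k l (e⁻¹ * a) := fun a ha l hl =>
    hl.notMem_of_ne amal hk (mul_mem (inv_mem he) ha)
  obtain ⟨γ, h₀, hγp, h₁, hγ⟩ := hX.isGeodesicMetric.exists_isGeodesic_through hp
  have hle : wordDist X x p ≤ wordDist X x y := hp ▸ Nat.le_add_right _ _
  have before := hγ.linked hX hXA (Nat.zero_le _) hle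
  have after := hγ.linked hX hXA hle le_rfl
  rw [h₀, hγp] at before
  rw [hγp, h₁] at after
  -- the geodesic crosses the coset `e * C`, which separates `p` from `A i`, on both sides of `p`
  obtain ⟨_, ⟨s, ⟨-, hs⟩, rfl⟩, hsC⟩ := before.exists_inv_mul_mem amal.le hr (inside x hx)
  obtain ⟨_, ⟨t, ⟨ht, ht'⟩, rfl⟩, htC⟩ := after.symm.exists_inv_mul_mem amal.le hr (inside y hy)
  have hpst := hγ.dist_add_dist hs ht ht'
  rw [hγp] at hpst
  obtain ⟨c, hc, hpc⟩ := hC.preimage_mul_left e⁻¹ (γ s) hsC (γ t) htC p hpst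
  exact ⟨c, by simpa using mul_mem he (amal.le i hc), hpc⟩

theorem IsQuasiconvexSet.exists_of_isQuasiconvex_subgroupOf
    (h : IsHyperbolicMetric (wordDist X) D) (hX : IsSymmGen X) {B K : Subgroup G} {R : ℕ}
    (hB : IsQuasiconvexSet (wordDist X) R (B : Set G)) (hKB : K ≤ B)
    (hK : IsQuasiconvex (K.subgroupOf B)) :
    ∃ R', IsQuasiconvexSet (wordDist X) R' (K : Set G) := by
  obtain ⟨Y, hY, X', hX', c, -, hdist⟩ := hK
  obtain ⟨Z, hZ, hZX⟩ := hB.exists_isSymmGen hX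
  obtain ⟨L, hL⟩ := hZ.exists_wordLength_map_le hX' (MonoidHom.id B)
  obtain ⟨N, hN⟩ := exists_nat_ge c
  have hrange : Set.range (B.subtype.comp (K.subgroupOf B).subtype) = K := by
    ext x
    exact ⟨by rintro ⟨y, rfl⟩; exact y.2, fun hx => ⟨⟨⟨x, hKB hx⟩, hx⟩, rfl⟩⟩
  rw [← hrange]
  refine h.exists_isQuasiconvexSet_range hX hY (B.subtype.comp (K.subgroupOf B).subtype)
    (c := N * (L + 1)) fun k => ?_
  have hYX' : wordLength Y k ≤ N * wordLength X' (k : B) + N := by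
    have : (wordLength Y k : ℝ) ≤ N * wordLength X' (k : B) + N :=
      (hdist k).trans (by gcongr)
    exact_mod_cast this
  calc wordLength Y k ≤ N * wordLength X' (k : B) + N := hYX'
    _ ≤ N * (L * (wordLength X ((k : B) : G) + 1)) + N := by
      gcongr
      exact (hL k).trans (Nat.mul_le_mul_left L (hZX k))
    _ ≤ N * (L + 1) * wordLength X ((k : B) : G) + N * (L + 1) := by
      linarith [Nat.zero_le (N * wordLength X ((k : B) : G))]

end Factors

section Conjugates

open scoped Pointwise

variable {G : Type*} [Group G] {B C H : Subgroup G} {X : Set G} {D : ℕ} {g q : G}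

theorem near_mul_left_iff (hg : g ∈ H) {r : ℕ} {x : G} :
    Near (wordDist X) r H (g * x) ↔ Near (wordDist X) r H x := by
  rw [← near_preimage_mul_left_iff, show (g * ·) ⁻¹' (H : Set G) = H from
    Set.ext fun _ => H.mul_mem_cancel_left hg]

theorem conj_inv_mul_smul (hg : g ∈ H) (q : G) :
    MulAut.conj (g * q)⁻¹ • H = MulAut.conj q⁻¹ • H := by
  rw [mul_inv_rev, map_mul, mul_smul, Subgroup.conj_smul_eq_self_of_mem (inv_mem hg)]

theorem Near.conj_smul (hX : IsSymmGen X) {r : ℕ} {x : G}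
    (hx : Near (wordDist X) r H (q * x)) :
    Near (wordDist X) (r + wordLength X q) (MulAut.conj q⁻¹ • H : Subgroup G) x := by
  obtain ⟨s, hs, hxs⟩ := hx
  refine ⟨q⁻¹ * s * q, mem_conj_smul_iff.2 (by simpa [mul_assoc] using hs), ?_⟩
  calc wordDist X x (q⁻¹ * s * q)
      ≤ wordDist X x (q⁻¹ * s) + wordDist X (q⁻¹ * s) (q⁻¹ * s * q) := hX.wordDist_triangle ..
    _ = wordDist X (q * x) s + wordLength X q := by
      rw [← wordDist_mul_left q x, mul_inv_cancel_left, wordDist, wordDist, inv_mul_cancel_left]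
    _ ≤ r + wordLength X q := Nat.add_le_add_right hxs _

theorem Near.of_conj_smul (hX : IsSymmGen X) {r : ℕ} {x : G}
    (hx : Near (wordDist X) r (MulAut.conj q⁻¹ • H : Subgroup G) x) :
    Near (wordDist X) (r + wordLength X q) H (q * x) := by
  have h := Near.conj_smul (H := MulAut.conj q⁻¹ • H) (q := q⁻¹) (x := q * x) hX (by simpa using hx)
  rwa [hX.wordLength_inv, smul_smul, ← map_mul, inv_inv, mul_inv_cancel, map_one, one_smul] at h

theorem IsSymmGen.exists_forall_wordLength_le_of_finite_inf (hX : IsSymmGen X) {P Q : Subgroup G}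
    [Finite ↥(P ⊓ Q)] (r : ℕ) :
    ∃ b, ∀ g, Near (wordDist X) r P g → Near (wordDist X) r Q g → wordLength X g ≤ b := by
  obtain ⟨R, hR⟩ := hX.exists_near_inf P Q r
  obtain ⟨m, hm⟩ := exists_wordLength_le_of_finite X (Set.toFinite ((P ⊓ Q : Subgroup G) : Set G))
  refine ⟨m + R, fun g hgP hgQ => ?_⟩
  obtain ⟨s, hs, hgs⟩ := hR g hgP hgQ
  have htriangle := hX.wordDist_triangle 1 s g
  rw [hX.wordDist_comm s g, wordDist_one_left, wordDist_one_left] at htriangle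
  linarith [hm s hs]

theorem IsSymmGen.exists_forall_near (hX : IsSymmGen X) (r : ℕ) {P : G → ℕ → Prop}
    (hP : ∀ q, Monotone (P q)) (hH : ∀ g ∈ H, ∀ q n, P q n → P (g * q) n)
    (h : ∀ q, ∃ n, P q n) : ∃ n, ∀ q, Near (wordDist X) r H q → P q n := by
  obtain ⟨n, hn⟩ := exists_forall_mem_of_finite (hX.finite_setOf_wordLength_le r) hP fun q _ => h q
  refine ⟨n, ?_⟩
  rintro q ⟨s, hs, hqs⟩
  rw [hX.wordDist_comm] at hqs
  simpa using hH s hs _ n (hn (s⁻¹ * q) hqs)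

theorem IsHyperbolicMetric.exists_add_le_of_finite_inf (h : IsHyperbolicMetric (wordDist X) D)
    (hX : IsSymmGen X) {R : ℕ} (hC : IsQuasiconvexSet (wordDist X) R (C : Set G))
    (hH : ∀ q : G, ∃ R,
      IsQuasiconvexSet (wordDist X) R (MulAut.conj q⁻¹ • H ⊓ B : Subgroup G)) (r : ℕ) :
    ∃ b, ∀ q, Near (wordDist X) r H q → Finite ↥(MulAut.conj q⁻¹ • H ⊓ C) →
      ∀ p ∈ C, ∀ x ∈ B, Near (wordDist X) r H (q * x) →
        wordLength X p + wordLength X x ≤ wordDist X p x + b := by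
  refine hX.exists_forall_near r (fun q _ _ hle hb hfin p hp x hx hxH => ?_)
    (fun g hg q n hn => ?_) fun q => ?_
  · exact (hb hfin p hp x hx hxH).trans (by gcongr)
  · simpa only [conj_inv_mul_smul hg, mul_assoc, near_mul_left_iff hg] using hn
  by_cases hfin : Finite ↥(MulAut.conj q⁻¹ • H ⊓ C)
  swap
  · exact ⟨0, fun h => absurd h hfin⟩
  set K := MulAut.conj q⁻¹ • H
  obtain ⟨R', hK⟩ := hH q
  obtain ⟨r', hr'⟩ := hX.exists_near_inf K B (r + wordLength X q)
  have : Finite ↥(C ⊓ (K ⊓ B)) := Set.Finite.subset (Set.toFinite ((K ⊓ C : Subgroup G) : Set G))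
    fun y hy => ⟨hy.2.1, hy.1⟩
  obtain ⟨b, hb⟩ := hX.exists_forall_wordLength_le_of_finite_inf (P := C) (Q := K ⊓ B)
    (max R R' + (D + 2 + 4 * r' + D))
  refine ⟨2 * b + 2, fun _ p hp x hx hxH => ?_⟩
  simpa only [wordDist_one_left] using h.dist_add_dist_le_of_diverge (hC.mono (le_max_left R R'))
    (hK.mono (le_max_right R R')) (h.near_of_mem _ C.one_mem) (h.near_of_mem _ hp)
    (h.near_of_mem _ (one_mem (K ⊓ B))) (hr' x (hxH.conj_smul hX) (h.near_of_mem _ hx))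
    (by simpa only [wordDist_one_left] using hb)

theorem IsHyperbolicMetric.exists_add_le_of_finite_inf_conj (h : IsHyperbolicMetric (wordDist X) D)
    (hX : IsSymmGen X) {R : ℕ} (hC : IsQuasiconvexSet (wordDist X) R (C : Set G)) (k : ℕ) :
    ∃ b, ∀ g, wordLength X g ≤ k → Finite ↥(C ⊓ MulAut.conj g • C) →
      ∀ p ∈ C, ∀ x, g⁻¹ * x ∈ C → wordLength X p + wordLength X x ≤ wordDist X p x + b := by
  refine exists_forall_mem_of_finite (hX.finite_setOf_wordLength_le k)
    (fun g _ _ hle hb hg p hp x hx => (hb hg p hp x hx).trans (by gcongr)) fun g _ => ?_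
  by_cases hfin : Finite ↥(C ⊓ MulAut.conj g • C)
  swap
  · exact ⟨0, fun h => absurd h hfin⟩
  set l := wordLength X g
  obtain ⟨b, hb⟩ := hX.exists_forall_wordLength_le_of_finite_inf (P := C) (Q := MulAut.conj g • C)
    (R + (D + 2 + 4 * l + D) + l)
  refine ⟨2 * b + 2, fun _ p hp x hx => ?_⟩
  simpa using h.dist_add_dist_le_of_diverge (r := l) hC (hC.preimage_mul_left g⁻¹)
    (h.near_of_mem _ C.one_mem) (h.near_of_mem _ hp) ⟨g, by simp, by simp [l]⟩
    (h.near_of_mem _ hx) fun z hz hz' => by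
      rw [wordDist_one_left]
      refine hb z (hz.mono (Nat.le_add_right _ _)) ?_
      simpa [hX.wordLength_inv] using (near_preimage_mul_left_iff.1 hz').conj_smul hX

theorem IsVirtuallyCyclic.exists_near_of_infinite_inf (hC : IsVirtuallyCyclic ↥C)
    (hX : IsSymmGen X) (H : Subgroup G) (r : ℕ) :
    ∃ r', ∀ q, Near (wordDist X) r H q → Infinite ↥(MulAut.conj q⁻¹ • H ⊓ C) →
      ∀ c ∈ C, Near (wordDist X) r' H (q * c) := by
  refine hX.exists_forall_near r (fun q _ _ hle hr hinf c hc => (hr hinf c hc).mono hle)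
    (fun g hg q n hn => ?_) fun q => ?_
  · simpa only [conj_inv_mul_smul hg, mul_assoc, near_mul_left_iff hg] using hn
  by_cases hinf : Infinite ↥(MulAut.conj q⁻¹ • H ⊓ C)
  · obtain ⟨r', hr'⟩ := exists_forall_near_of_relIndex_ne_zero X
      (hC.relIndex_ne_zero_of_infinite (K := MulAut.conj q⁻¹ • H))
    exact ⟨_, fun _ c hc => (hr' c hc).of_conj_smul hX⟩
  · exact ⟨0, fun h => absurd h hinf⟩

theorem IsHyperbolicMetric.exists_near_of_isQuasiconvexSet_inf
    (h : IsHyperbolicMetric (wordDist X) D) (hX : IsSymmGen X)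
    (hH : ∀ q : G, ∃ R,
      IsQuasiconvexSet (wordDist X) R (MulAut.conj q⁻¹ • H ⊓ B : Subgroup G)) (r e : ℕ) :
    ∃ r', ∀ q, Near (wordDist X) r H q → ∀ y ∈ B, Near (wordDist X) r H (q * y) →
      ∀ x, wordLength X x + wordDist X x y ≤ wordLength X y + e →
        Near (wordDist X) r' H (q * x) := by
  refine hX.exists_forall_near r (fun q _ _ hle hr y hy hyH x hx => (hr y hy hyH x hx).mono hle)
    (fun g hg q n hn => ?_) fun q => ?_
  · simpa only [mul_assoc, near_mul_left_iff hg] using hn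
  obtain ⟨R, hK⟩ := hH q
  obtain ⟨r', hr'⟩ := hX.exists_near_inf (MulAut.conj q⁻¹ • H) B (r + wordLength X q)
  refine ⟨R + (e + 4 * r' + D) + wordLength X q, fun y hy hyH x hx => Near.of_conj_smul hX ?_⟩
  obtain ⟨s, hs, hxs⟩ := h.near_of_isQuasiconvexSet hK (h.near_of_mem _ (one_mem _))
    (hr' y (hyH.conj_smul hX) (h.near_of_mem _ hy)) (by simpa using hx)
  exact ⟨s, hs.1, hxs⟩

end Conjugates

section Global

open scoped Pointwise

variable {G : Type*} [Group G] {A : Bool → Subgroup G} {B C H M : Subgroup G} {X : Set G} {D : ℕ}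

theorem IsGeodesicMetric.exists_excess_le_of_near {α : Type*} {d : α → α → ℕ}
    (h : IsGeodesicMetric d) {γ q : ℕ → α} {n N E : ℕ} (hγ : IsGeodesic d γ n) (hN : N ≠ 0)
    (hq0 : q 0 = γ 0) (hqN : q N = γ n) (hq : ∀ j ≤ N, Near d E (γ '' Set.Icc 0 n) (q j)) {t : ℕ}
    (ht : t ≤ n) :
    ∃ j < N, d (q j) (γ t) + d (γ t) (q (j + 1)) ≤ d (q j) (q (j + 1)) + 4 * E := by
  obtain ⟨j, hj, ⟨-, s, hst, hs⟩, hnext⟩ := exists_lt_and_not_succ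
    (P := fun j => j ≠ N ∧ ∃ s ≤ t, d (q j) (γ s) ≤ E)
    ⟨hN.symm, 0, t.zero_le, by simp [hq0, h.dist_self]⟩ (n := N) (by simp)
  obtain ⟨s', hs'n, hts', hs'⟩ : ∃ s' ≤ n, t ≤ s' ∧ d (q (j + 1)) (γ s') ≤ E := by
    obtain heq | hne := eq_or_ne (j + 1) N
    · exact ⟨n, le_rfl, ht, by simp [heq, hqN, h.dist_self]⟩
    · obtain ⟨_, ⟨s', ⟨-, hs'n⟩, rfl⟩, hs'⟩ := hq (j + 1) hj
      exact ⟨s', hs'n, not_lt.1 fun hlt => hnext ⟨hne, s', hlt.le, hs'⟩, hs'⟩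
  refine ⟨j, hj, ?_⟩
  linarith [hγ.dist_add_dist hst hts' hs'n, h.triangle (q j) (γ s) (γ t),
    h.triangle (γ t) (γ s') (q (j + 1)), h.triangle (γ s) (q j) (γ s'),
    h.triangle (q j) (q (j + 1)) (γ s'), h.dist_comm (γ s) (q j),
    h.dist_comm (γ s') (q (j + 1))]

theorem near_of_forall_near_or_mem (hX : IsSymmGen X) (hM : C.relIndex M ≠ 0) {V : Set G}
    {q : ℕ → G} {N E : ℕ} (hq : ∀ k l, k < l → l ≤ N → (q k)⁻¹ * q l ∉ C)
    (hstep : ∀ j ≤ N, Near (wordDist X) E V (q j) ∨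
      j < N ∧ wordDist X (q j) (q (j + 1)) ≤ E ∧ (q j)⁻¹ * q (j + 1) ∈ M) {j : ℕ} (hj : j ≤ N) :
    Near (wordDist X) (E + C.relIndex M * E) V (q j) := by
  have run : ∀ m, Near (wordDist X) (E + m * E) V (q j) ∨
      j + m ≤ N ∧ wordDist X (q j) (q (j + m)) ≤ m * E ∧ ∀ i ≤ m, (q j)⁻¹ * q (j + i) ∈ M := by
    intro m
    induction m with
    | zero => exact .inr ⟨hj, by simp, by simp [M.one_mem]⟩
    | succ m ih =>
      rw [Nat.succ_mul]
      rcases ih with ih | ⟨hm, hdist, hmem⟩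
      · exact .inl (ih.mono (by omega))
      rcases hstep (j + m) hm with ⟨v, hv, hqv⟩ | ⟨hlt, hdist', hmem'⟩
      · exact .inl ⟨v, hv, by linarith [hX.wordDist_triangle (q j) (q (j + m)) v]⟩
      refine .inr ⟨hlt, ?_, fun i hi => ?_⟩
      · have := hX.wordDist_triangle (q j) (q (j + m)) (q (j + (m + 1)))
        rw [add_assoc] at hdist'
        linarith
      · obtain hi | rfl := Nat.le_succ_iff.1 hi
        · exact hmem i hi
        · simpa [mul_assoc, add_assoc] using M.mul_mem (hmem m le_rfl) hmem'
  refine (run (C.relIndex M)).resolve_right fun ⟨hN, _, hmem⟩ => ?_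
  have := le_relIndex_of_pairwise_notMem hM (n := C.relIndex M + 1)
    (s := fun i => (q j)⁻¹ * q (j + i)) (fun i hi => hmem i (Nat.le_of_lt_succ hi))
    fun i k hik hk => by
      have := hq (j + i) (j + k) (Nat.add_lt_add_left hik j)
        ((Nat.add_le_add_left (Nat.le_of_lt_succ hk) j).trans hN)
      simpa [mul_assoc] using this
  omega

theorem IsVirtuallyCyclic.exists_excess_le_or_mem (hC : IsVirtuallyCyclic ↥C)
    (h : IsHyperbolicMetric (wordDist X) D) (hX : IsSymmGen X)
    (hM : ∀ g ∉ M, Finite ↥(C ⊓ MulAut.conj g • C))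
    (hH : ∀ q : G, ∃ R,
      IsQuasiconvexSet (wordDist X) R (MulAut.conj q⁻¹ • H ⊓ B : Subgroup G)) (r : ℕ) :
    ∃ E, ∀ q q' p p', Near (wordDist X) r H q → Near (wordDist X) r H q' →
      q⁻¹ * q' ∈ B → q⁻¹ * p ∈ C → q'⁻¹ * p' ∈ C →
      (Finite ↥(MulAut.conj q⁻¹ • H ⊓ C) ∨ q = p) →
      (Finite ↥(MulAut.conj q'⁻¹ • H ⊓ C) ∨ q' = p') →
      wordDist X p q + wordDist X q p' ≤ wordDist X p p' + E ∨
        wordDist X q q' ≤ E ∧ q⁻¹ * q' ∈ M := by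
  obtain ⟨R, hCR⟩ := hC.exists_isQuasiconvexSet h hX
  obtain ⟨b, hb⟩ := h.exists_add_le_of_finite_inf hX hCR hH r
  obtain ⟨b', hb'⟩ := h.exists_add_le_of_finite_inf_conj hX hCR (b + D)
  have corner : ∀ q p x, Near (wordDist X) r H q → Finite ↥(MulAut.conj q⁻¹ • H ⊓ C) →
      q⁻¹ * p ∈ C → q⁻¹ * x ∈ B → Near (wordDist X) r H x →
      wordDist X p q + wordDist X q x ≤ wordDist X p x + b := fun q p x hq hfin hp hx hxH => by
    rw [hX.wordDist_comm p q, ← wordDist_mul_left q⁻¹ p]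
    exact hb q hq hfin _ hp _ hx (by simpa using hxH)
  refine ⟨b + D + b', fun q q' p p' hq hq' hqq' hp hp' hf hf' => ?_⟩
  rcases hf with hf | rfl
  swap
  · exact .inl (by simp)
  have hcorner := corner q p q' hq hf hp hqq' hq'
  rcases hf' with hf' | rfl
  swap
  · exact .inl (by linarith)
  by_cases hlong : b + D < wordDist X q q'
  · have hcorner' := corner q' p' q hq' hf' hp' (by simpa using inv_mem hqq') hq
    rw [hX.wordDist_comm p' q', hX.wordDist_comm q' q, hX.wordDist_comm p' q, add_comm] at hcorner'
    have := h.dist_add_dist_le_of_corners hcorner hcorner' hlong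
    exact .inl (by linarith)
  by_cases hmem : q⁻¹ * q' ∈ M
  · exact .inr ⟨by omega, hmem⟩
  · have := hb' (q⁻¹ * q') (not_lt.1 hlong) (hM _ hmem) _ hp (q⁻¹ * p') (by simpa [mul_assoc])
    rw [wordDist_mul_left] at this
    change wordDist X q p + wordDist X q p' ≤ _ at this
    exact .inl (by linarith [h.dist_comm p q])

theorem exists_forall_linked_of_fg (hX : IsSymmGen X) (hXA : ∀ x ∈ X, ∃ k, x ∈ A k) (hH : H.FG) :
    ∃ r, ∀ g ∈ H, Linked A {x | Near (wordDist X) r H x} 1 g := by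
  obtain ⟨S, rfl⟩ := hH
  obtain ⟨r, hr⟩ := exists_wordLength_le_of_finite X S.finite_toSet
  set V := {x | Near (wordDist X) r (Subgroup.closure (S : Set G)) x}
  have hV : ∀ g ∈ Subgroup.closure (S : Set G), ∀ x ∈ V, g * x ∈ V := fun g hg x hx =>
    (near_mul_left_iff hg).2 hx
  have generator : ∀ s ∈ S, Linked A V 1 s := fun s hs => by
    obtain ⟨γ, h₀, h₁, hγ⟩ := hX.isGeodesicMetric.exists_isGeodesic 1 s
    have hlink := hγ.linked hX hXA (Nat.zero_le _) le_rfl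
    rw [h₀, h₁] at hlink
    refine hlink.mono ?_
    rintro _ ⟨t, ⟨-, ht⟩, rfl⟩
    refine ⟨1, one_mem _, ?_⟩
    rw [hX.wordDist_comm, ← h₀, hγ 0 t (Nat.zero_le t) ht]
    exact (Nat.sub_le _ _).trans (ht.trans (by simpa using hr s hs))
  refine ⟨r, fun g hg => ?_⟩
  induction hg using Subgroup.closure_induction_right with
  | one => exact .refl
  | mul_right x hx y hy ih =>
    have hlink := (generator y hy).mul_left (hV x hx)
    rw [mul_one] at hlink
    exact Relation.ReflTransGen.trans ih hlink
  | mul_inv_cancel x hx y hy ih =>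
    have hxy := mul_mem hx (inv_mem (Subgroup.subset_closure hy))
    have hlink := (generator y hy).mul_left (hV _ hxy)
    rw [mul_one, inv_mul_cancel_right] at hlink
    exact Relation.ReflTransGen.trans ih hlink.symm

theorem IsAmalgamatedFreeProduct.exists_isCosetChain_near
    (amal : IsAmalgamatedFreeProduct (A true) (A false) C) (hC : IsVirtuallyCyclic ↥C)
    (hX : IsSymmGen X) (hXA : ∀ x ∈ X, ∃ k, x ∈ A k) (hH : H.FG) :
    ∃ r, ∀ g ∈ H, g ∉ C → ∀ W, Linked A W 1 g → 1 ∈ W → g ∈ W →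
      ∃ (N : ℕ) (q p : ℕ → G) (ι : ℕ → Bool), IsCosetChain A C N q ι ∧ q 0 = 1 ∧ q N = g ∧
        ∀ k ≤ N, Near (wordDist X) r H (q k) ∧ p k ∈ W ∧ (q k)⁻¹ * p k ∈ C ∧
          (Finite ↥(MulAut.conj (q k)⁻¹ • H ⊓ C) ∨ q k = p k) := by
  obtain ⟨r₀, hr₀⟩ := exists_forall_linked_of_fg hX hXA hH
  obtain ⟨r₁, hr₁⟩ := hC.exists_near_of_infinite_inf hX H r₀
  refine ⟨max r₀ r₁, fun g hg hgC W hW h1W hgW => ?_⟩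
  have hnear : ∀ x ∈ H, ∀ r, Near (wordDist X) r H x := fun x hx r =>
    hX.isGeodesicMetric.near_of_mem r hx
  obtain ⟨N, q, ι, hq, hq0, hqN, hsep⟩ := amal.exists_isCosetChain hgC
  have choice : ∀ k ≤ N, ∃ q' p, Near (wordDist X) (max r₀ r₁) H q' ∧ p ∈ W ∧
      (q k)⁻¹ * q' ∈ C ∧ q'⁻¹ * p ∈ C ∧ (Finite ↥(MulAut.conj q'⁻¹ • H ⊓ C) ∨ q' = p) ∧
        (q k ∈ H → q k ∈ W → q' = q k) := fun k hk => by
    by_cases hend : q k ∈ H ∧ q k ∈ W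
    · exact ⟨q k, q k, hnear _ hend.1 _, hend.2, by simp [C.one_mem], by simp [C.one_mem],
        .inr rfl, fun _ _ => rfl⟩
    obtain ⟨v, hv, hqv⟩ := hsep _ (hr₀ g hg) (hnear 1 H.one_mem r₀) (hnear g hg r₀) k hk
    obtain ⟨w, hw, hqw⟩ := hsep W hW h1W hgW k hk
    have hvw : v⁻¹ * w ∈ C := by simpa [mul_assoc] using C.mul_mem (C.inv_mem hqv) hqw
    have hne (u : G) : q k ∈ H → q k ∈ W → u = q k := fun hqH hqW => absurd ⟨hqH, hqW⟩ hend
    rcases finite_or_infinite ↥(MulAut.conj v⁻¹ • H ⊓ C) with hfin | hinf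
    · exact ⟨v, w, hv.mono (le_max_left _ _), hw, hqv, hvw, .inl hfin, hne v⟩
    · have hwH : Near (wordDist X) r₁ H w := by simpa using hr₁ v hv hinf _ hvw
      exact ⟨w, w, hwH.mono (le_max_right _ _), hw, hqw, by simp [C.one_mem], .inr rfl, hne w⟩
  choose! q' p hqH hpW hqq' hqp hfin hend using choice
  refine ⟨N, q', p, ι, hq.congr amal.le hqq', ?_, ?_, fun k hk =>
    ⟨hqH k hk, hpW k hk, hqp k hk, hfin k hk⟩⟩
  · simpa [hq0, H.one_mem, h1W] using hend 0 N.zero_le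
  · simpa [hqN, hg, hgW] using hend N le_rfl

theorem IsAmalgamatedFreeProduct.exists_isCosetChain_near_isGeodesic
    (amal : IsAmalgamatedFreeProduct (A true) (A false) C) (hC : IsVirtuallyCyclic ↥C)
    (h : IsHyperbolicMetric (wordDist X) D) (hX : IsSymmGen X) (hXA : ∀ x ∈ X, ∃ k, x ∈ A k)
    (hH : H.FG) (hqc : ∀ (i : Bool) (q : G), ∃ R,
      IsQuasiconvexSet (wordDist X) R (MulAut.conj q⁻¹ • H ⊓ A i : Subgroup G)) :
    ∃ r E, ∀ g ∈ H, g ∉ C → ∀ (γ : ℕ → G) (n : ℕ), IsGeodesic (wordDist X) γ n → γ 0 = 1 → γ n = g →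
      ∃ (N : ℕ) (q : ℕ → G) (ι : ℕ → Bool), IsCosetChain A C N q ι ∧ q 0 = 1 ∧ q N = g ∧
        ∀ k ≤ N, Near (wordDist X) r H (q k) ∧ Near (wordDist X) E (γ '' Set.Icc 0 n) (q k) := by
  obtain ⟨r, hr⟩ := amal.exists_isCosetChain_near hC hX hXA hH
  obtain ⟨M, hM, hMfin⟩ := hC.exists_relIndex_ne_zero_forall_finite_inf_conj h hX
  choose E hE using fun i => hC.exists_excess_le_or_mem h hX hMfin (hqc i) r
  set e := max (E true) (E false)
  have hEe : ∀ i, E i ≤ e := Bool.forall_bool.2 ⟨le_max_right _ _, le_max_left _ _⟩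
  refine ⟨r, e + D + C.relIndex M * (e + D), fun g hg hgC γ n hγ h₀ h₁ => ?_⟩
  have hlink := hγ.linked hX hXA n.zero_le le_rfl
  have hend₀ : γ 0 ∈ γ '' Set.Icc 0 n := ⟨0, by simp, rfl⟩
  have hend₁ : γ n ∈ γ '' Set.Icc 0 n := ⟨n, by simp, rfl⟩
  rw [h₀] at hlink hend₀
  rw [h₁] at hlink hend₁
  obtain ⟨N, q, p, ι, hq, hq0, hqN, hqp⟩ := hr g hg hgC _ hlink hend₀ hend₁
  refine ⟨N, q, ι, hq, hq0, hqN, fun k hk => ⟨(hqp k hk).1,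
    near_of_forall_near_or_mem hX hM hq.notMem (fun j hj => ?_) hk⟩⟩
  rcases hj.lt_or_eq with hlt | rfl
  · obtain ⟨hjH, ⟨s, ⟨-, hs⟩, hsp⟩, hjC, hjfin⟩ := hqp j hj
    obtain ⟨hjH', ⟨s', ⟨-, hs'⟩, hsp'⟩, hjC', hjfin'⟩ := hqp (j + 1) hlt
    refine (hE (ι j) _ _ _ _ hjH hjH' (hq.step_mem j hlt) hjC hjC' hjfin hjfin').imp
      (fun hexcess => ?_) fun hshort => ⟨hlt, by linarith [hshort.1, hEe (ι j)], hshort.2⟩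
    rw [← hsp, ← hsp'] at hexcess
    obtain ⟨t, ht, hqt⟩ := h.exists_near_isGeodesic hγ hs hs' hexcess
    exact ⟨γ t, ⟨t, ⟨t.zero_le, ht⟩, rfl⟩, by linarith [hEe (ι j)]⟩
  · exact .inl (h.near_of_mem _ (hqN ▸ hend₁))

theorem IsAmalgamatedFreeProduct.exists_isQuasiconvexSet_of_forall_conj_inf
    (amal : IsAmalgamatedFreeProduct (A true) (A false) C) (hC : IsVirtuallyCyclic ↥C)
    (h : IsHyperbolicMetric (wordDist X) D) (hX : IsSymmGen X) (hXA : ∀ x ∈ X, ∃ k, x ∈ A k)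
    (hH : H.FG) (hqc : ∀ (i : Bool) (q : G), ∃ R,
      IsQuasiconvexSet (wordDist X) R (MulAut.conj q⁻¹ • H ⊓ A i : Subgroup G)) :
    ∃ R, IsQuasiconvexSet (wordDist X) R (H : Set G) := by
  obtain ⟨r, E, hchain⟩ := amal.exists_isCosetChain_near_isGeodesic hC h hX hXA hH hqc
  choose R hR using fun i => h.exists_near_of_isQuasiconvexSet_inf hX (hqc i) r (4 * E)
  have between : ∀ i q y x, Near (wordDist X) r H q → Near (wordDist X) r H y → q⁻¹ * y ∈ A i →
      wordDist X q x + wordDist X x y ≤ wordDist X q y + 4 * E →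
      Near (wordDist X) (max (R true) (R false)) H x := fun i q y x hq hy hqy hx => by
    have := hR i q hq _ hqy (by simpa using hy) (q⁻¹ * x) (by rwa [wordDist_mul_left])
    rw [mul_inv_cancel_left] at this
    exact this.mono (Bool.rec (le_max_right _ _) (le_max_left _ _) i)
  have key : ∀ g ∈ H, ∀ x, wordDist X 1 x + wordDist X x g = wordDist X 1 g →
      Near (wordDist X) (max (R true) (R false)) H x := fun g hg x hx => by
    by_cases hgC : g ∈ C
    · exact between true 1 g x (h.near_of_mem r H.one_mem) (h.near_of_mem r hg)
        (by simpa using amal.le true hgC) (by linarith)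
    obtain ⟨γ, h₀, hγx, h₁, hγ⟩ := h.exists_isGeodesic_through hx
    obtain ⟨N, q, ι, hq, hq0, hqN, hnear⟩ := hchain g hg hgC γ _ hγ h₀ h₁
    have hN : N ≠ 0 := by
      rintro rfl
      exact hgC (hqN ▸ hq0 ▸ C.one_mem)
    obtain ⟨j, hj, hjx⟩ := h.exists_excess_le_of_near hγ hN (hq0.trans h₀.symm)
      (hqN.trans h₁.symm) (fun k hk => (hnear k hk).2) (hx ▸ Nat.le_add_right _ _)
    rw [hγx] at hjx
    exact between (ι j) _ _ x (hnear j hj.le).1 (hnear (j + 1) hj).1 (hq.step_mem j hj) hjx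
  refine ⟨max (R true) (R false), fun x hx y hy p hp => ?_⟩
  rw [← near_mul_left_iff (inv_mem hx)]
  refine key (x⁻¹ * y) (mul_mem (inv_mem hx) hy) _ ?_
  rw [wordDist_one_left, wordDist_one_left, wordDist_mul_left]
  exact hp

end Global

/-- **Lemma 3.2.** A finitely generated subgroup of an amalgam of hyperbolic groups along a
virtually cyclic subgroup, all of whose conjugates meet the factors in quasiconvex
subgroups, is word hyperbolic. -/
theorem subgroup_wordHyperbolic_of_conj_inter_quasiconvex {G : Type u} [Group G]
    (A : Bool → Subgroup G) (C : Subgroup G)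
    (hG : IsWordHyperbolic G)
    (amal : IsAmalgamatedFreeProduct (A true) (A false) C)
    (hC : IsVirtuallyCyclic ↥C)
    (H : Subgroup G) (hH : H.FG)
    (hqc : ∀ (g : G) (i : Bool),
      IsQuasiconvex ((H.map (MulAut.conj g⁻¹).toMonoidHom ⊓ A i).subgroupOf (A i))) :
    IsWordHyperbolic ↥H := by
  have hA : ∀ i, ∃ Y : Set (A i), IsSymmGen Y := fun i =>
    let ⟨_, _, Y, hY, _⟩ := hqc 1 i
    ⟨Y, hY⟩
  choose Y hY using hA
  let X : Set G := ⋃ i, (A i).subtype '' Y i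
  have hX : IsSymmGen X := IsSymmGen.iUnion_image_subtype hY amal.sup_eq_top
  have hXA : ∀ x ∈ X, ∃ k, x ∈ A k := fun x hx =>
    let ⟨k, y, _, hyx⟩ := Set.mem_iUnion.1 hx
    ⟨k, hyx ▸ y.2⟩
  obtain ⟨D, h⟩ := hG.exists_isHyperbolicMetric_of_isSymmGen hX
  obtain ⟨R, hR⟩ := hC.exists_isQuasiconvexSet h hX
  obtain ⟨R', hR'⟩ := amal.exists_isQuasiconvexSet_of_forall_conj_inf hC h hX hXA hH fun i q =>
    (amal.isQuasiconvexSet_factor hX hXA hR i).exists_of_isQuasiconvex_subgroupOf h hX inf_le_right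
      (hqc q i)
  obtain ⟨Z, hZ, hZX⟩ := hR'.exists_isSymmGen hX
  obtain ⟨D', h'⟩ := h.exists_isHyperbolicMetric_of_map hX hZ H.subtype (c := 1)
    fun k => by simpa using hZX k
  exact h'.isWordHyperbolic hZ
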